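/- arXiv:2108.01024 — 2 statements merged into one kernel-verified Lean document; each statement's English description precedes it below -/
import Mathlib

section
/- For every prime power q, C_{7,4}(q) = q^21 − 28q^20 + 322q^19 − 1925q^18 + 5571q^17 + 839q^16 − 18320q^15 − 2695q^14 + 7455q^13 + 19111q^12 + 17074q^11 − 9540q^10 − 13027q^9 − 19922q^8 + 924q^7 + 14160q^6 + (595q^3 − 8260q^2 + 20160q − 8820)·A_6(4,q) + 210·A_{h_1}(4,q) + 180·A_{h_2}(4,q) − 2520·A_{h_3}(4,q) + 3780·A_{h_5}(4,q). -/
open scoped LinearAlgebra.Projectivization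

/-- Three points of `ℙ³(F_q)` are collinear if vector representatives of them span a
subspace of `F_q^4` of dimension at most 2. -/
def Collinear3 (F : Type) [Field F] (x y z : ℙ F (Fin 4 → F)) : Prop :=
  Module.finrank F ↥(x.submodule ⊔ y.submodule ⊔ z.submodule) ≤ 2

/-- Four points of `ℙ³(F_q)` are coplanar if vector representatives of them span a
subspace of `F_q^4` of dimension at most 3. -/
def Coplanar4 (F : Type) [Field F] (x y z w : ℙ F (Fin 4 → F)) : Prop :=
  Module.finrank F ↥(x.submodule ⊔ y.submodule ⊔ z.submodule ⊔ w.submodule) ≤ 3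

/-- A strong realization in `ℙ³(F_q)` of a configuration on points `{0,…,6}` given by a
list of planes and a list of lines: an injective map `σ` such that a triple of image points
is collinear iff its index set is contained in a listed line, and four image points are
coplanar iff their index set is contained in a listed plane. -/
def IsConfigReal (F : Type) [Field F] (planes lines : Finset (Finset (Fin 7)))
    (σ : Fin 7 → ℙ F (Fin 4 → F)) : Prop :=
  Function.Injective σ ∧
    (∀ a b c : Fin 7, a ≠ b → a ≠ c → b ≠ c →
      (Collinear3 F (σ a) (σ b) (σ c) ↔ ∃ l ∈ lines, ({a, b, c} : Finset (Fin 7)) ⊆ l)) ∧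
    (∀ a b c d : Fin 7, a ≠ b → a ≠ c → a ≠ d → b ≠ c → b ≠ d → c ≠ d →
      (Coplanar4 F (σ a) (σ b) (σ c) (σ d) ↔
        ∃ h ∈ planes, ({a, b, c, d} : Finset (Fin 7)) ⊆ h))

/-- A strong realization in `ℙ³(F_q)` of the hyperfiguration on 6 points: an injective
`σ : {0,…,5} → ℙ³(F_q)` such that a triple of image points is collinear iff its index set
is contained in `{0,1,2}` or `{3,4,5}`, and four image points are coplanar iff their index
set is one of the six listed planes. `A_6(4,q)` is the number of such maps. -/
def IsHyp6Real (F : Type) [Field F] (σ : Fin 6 → ℙ F (Fin 4 → F)) : Prop :=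
  Function.Injective σ ∧
    (∀ a b c : Fin 6, a ≠ b → a ≠ c → b ≠ c →
      (Collinear3 F (σ a) (σ b) (σ c) ↔
        ({a, b, c} : Finset (Fin 6)) ⊆ {0, 1, 2} ∨
          ({a, b, c} : Finset (Fin 6)) ⊆ {3, 4, 5})) ∧
    (∀ a b c d : Fin 6, a ≠ b → a ≠ c → a ≠ d → b ≠ c → b ≠ d → c ≠ d →
      (Coplanar4 F (σ a) (σ b) (σ c) (σ d) ↔
        ({a, b, c, d} : Finset (Fin 6)) ∈
          ({{0, 1, 2, 3}, {0, 1, 2, 4}, {0, 1, 2, 5}, {0, 3, 4, 5}, {1, 3, 4, 5},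
            {2, 3, 4, 5}} : Finset (Finset (Fin 6)))))

/-- An ordered `n`-arc in `ℙ³(F_q)`. -/
def IsArc4 (F : Type) [Field F] {n : ℕ} (σ : Fin n → ℙ F (Fin 4 → F)) : Prop :=
  Function.Injective σ ∧
    ∀ a b c d : Fin n, a ≠ b → a ≠ c → a ≠ d → b ≠ c → b ≠ d → c ≠ d →
      ¬ Coplanar4 F (σ a) (σ b) (σ c) (σ d)

/-- Planes of the hyperfiguration `h₁`. -/
def h1planes : Finset (Finset (Fin 7)) :=
  {{0, 1, 2, 3}, {0, 1, 4, 5}, {0, 2, 4, 6}, {1, 2, 5, 6}, {1, 3, 4, 6}, {2, 3, 4, 5}}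

/-- Planes of the hyperfiguration `h₂` (the complement of the Fano plane). -/
def h2planes : Finset (Finset (Fin 7)) :=
  {{0, 1, 2, 3}, {0, 1, 4, 5}, {0, 2, 4, 6}, {0, 3, 5, 6}, {1, 2, 5, 6}, {1, 3, 4, 6},
    {2, 3, 4, 5}}

/-- Planes of the hyperfiguration `h₃`. -/
def h3planes : Finset (Finset (Fin 7)) :=
  {{0, 1, 2, 3}, {0, 1, 2, 4}, {0, 1, 2, 5}, {0, 1, 2, 6}, {0, 3, 4, 5}, {1, 3, 4, 6},
    {2, 3, 5, 6}}

/-- Lines of the hyperfiguration `h₃`. -/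
def h3lines : Finset (Finset (Fin 7)) := {{0, 1, 2}}

/-- Planes of the hyperfiguration `h₅`. -/
def h5planes : Finset (Finset (Fin 7)) :=
  {{0, 1, 2, 3, 4}, {0, 1, 2, 3, 5}, {0, 1, 2, 3, 6}, {0, 4, 5, 6}, {1, 4, 5, 6},
    {2, 4, 5, 6}, {3, 4, 5, 6}}

/-- Lines of the hyperfiguration `h₅`. -/
def h5lines : Finset (Finset (Fin 7)) := {{0, 1, 2, 3}, {4, 5, 6}}

/-!
Gale duality sends an arc of `n + m` points in `PG(n - 1, q)` to one in `PG(m - 1, q)`, bijectively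
up to projective equivalence, so counting 7-arcs in space amounts to counting 7-arcs in the plane.
There an arc is extended by a point off all its secants. The number of such points is computed by
inclusion–exclusion, in which only pairwise disjoint secants can meet off the arc; for a 6-arc the
triples of concurrent disjoint secants are counted separately, and they depend on the
characteristic: the diagonal triangle of a quadrangle degenerates exactly when `2 = 0`. The same
dichotomy governs `h₁` and `h₂` (the complement of the Fano plane), while each other hyperfiguration
is brought to an explicit normal form by the general linear group. Comparing the resulting
polynomials in `q` gives the formula.
-/

section Realizes

variable {K V ι : Type*} [Field K] [AddCommGroup V] [Module K V]

/-- `Realizes K r D v` says that the dependent `r`-subsets of the vector family `v` are exactly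
those satisfying `D`: in rank `r`, the family `v` represents the matroid whose nonbases are given
by `D`. -/
def Realizes (K : Type*) {V ι : Type*} [Field K] [AddCommGroup V] [Module K V]
    (r : ℕ) (D : Finset ι → Prop) (v : ι → V) : Prop :=
  ∀ s : Finset ι, s.card = r → (¬ LinearIndepOn K v s ↔ D s)

theorem Realizes.not_iff {r : ℕ} {D : Finset ι → Prop} {v : ι → V} (h : Realizes K r D v)
    {s : Finset ι} (hs : s.card = r) : LinearIndepOn K v s ↔ ¬ D s := by
  rw [← h s hs, not_not]

theorem realizes_congr {r : ℕ} {D D' : Finset ι → Prop} {v : ι → V}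
    (h : ∀ s : Finset ι, s.card = r → (D s ↔ D' s)) : Realizes K r D v ↔ Realizes K r D' v :=
  forall₂_congr fun s hs => by rw [h s hs]

theorem linearIndepOn_units_smul_iff {v : ι → V} {s : Set ι} (c : ι → Kˣ) :
    LinearIndepOn K (c • v) s ↔ LinearIndepOn K v s :=
  LinearIndependent.units_smul_iff (fun i : s => v i) fun i : s => c i

theorem linearIndepOn_linearEquiv_comp_iff {v : ι → V} {s : Set ι} (g : V ≃ₗ[K] V) :
    LinearIndepOn K (g ∘ v) s ↔ LinearIndepOn K v s :=
  LinearMap.linearIndependent_iff (v := fun i : s => v i) (g : V →ₗ[K] V) g.ker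

theorem realizes_units_smul_iff {r : ℕ} {D : Finset ι → Prop} {v : ι → V} (c : ι → Kˣ) :
    Realizes K r D (c • v) ↔ Realizes K r D v := by
  simp only [Realizes, linearIndepOn_units_smul_iff]

theorem realizes_linearEquiv_comp_iff {r : ℕ} {D : Finset ι → Prop} {v : ι → V}
    (g : V ≃ₗ[K] V) : Realizes K r D (g ∘ v) ↔ Realizes K r D v := by
  simp only [Realizes, linearIndepOn_linearEquiv_comp_iff]

theorem linearIndepOn_iff_card_le_finrank {v : ι → V} {s : Finset ι} :
    LinearIndepOn K v s ↔ s.card ≤ Module.finrank K (Submodule.span K (v '' s)) := by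
  rw [LinearIndepOn, linearIndependent_iff_card_le_finrank_span, Set.image_eq_range]
  exact Iff.of_eq (congrArg (· ≤ _) (Fintype.card_coe s))

theorem finrank_span_image_eq_card {v : ι → V} {s : Finset ι} (hs : LinearIndepOn K v s) :
    Module.finrank K (Submodule.span K (v '' s)) = s.card := by
  rw [Set.image_eq_range]
  exact (finrank_span_eq_card hs).trans (Fintype.card_coe s)

theorem span_image_eq_top [FiniteDimensional K V] {v : ι → V} {s : Finset ι}
    (hs : LinearIndepOn K v s) (hcard : s.card = Module.finrank K V) :
    Submodule.span K (v '' s) = ⊤ :=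
  Submodule.eq_top_of_finrank_eq ((finrank_span_image_eq_card hs).trans hcard)

theorem Realizes.linearIndepOn_iff_exists_superset [Finite ι] [FiniteDimensional K V] {r : ℕ}
    (hr : Module.finrank K V = r) {D : Finset ι → Prop} {v : ι → V} (h : Realizes K r D v)
    (hD : ∃ t : Finset ι, t.card = r ∧ ¬ D t) {s : Finset ι} :
    LinearIndepOn K v s ↔ ∃ t, s ⊆ t ∧ t.card = r ∧ ¬ D t := by
  constructor
  · intro hs
    obtain ⟨t₀, ht₀, hDt₀⟩ := hD
    obtain ⟨b, -, hsb, hspan, hb⟩ := exists_linearIndepOn_extension hs (Set.subset_univ _)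
    lift b to Finset ι using Set.toFinite b
    have hb_top : Submodule.span K (v '' b) = ⊤ := by
      rw [eq_top_iff, ← span_image_eq_top ((h.not_iff ht₀).2 hDt₀) (ht₀.trans hr.symm),
        Submodule.span_le]
      exact (Set.image_mono (Set.subset_univ _)).trans hspan
    have hb_card : b.card = r := by
      rw [← finrank_span_image_eq_card hb, hb_top, finrank_top, hr]
    exact ⟨b, by exact_mod_cast hsb, hb_card, (h.not_iff hb_card).1 hb⟩
  · rintro ⟨t, hst, ht, hDt⟩
    exact ((h.not_iff ht).2 hDt).mono (by exact_mod_cast hst)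

end Realizes

section Projective

variable {ι K V : Type*} [Field K] [AddCommGroup V] [Module K V]

theorem card_eq_card_projective_mul_card_units_pow [Finite ι] {P : (ι → V) → Prop}
    (hP : ∀ (c : ι → Kˣ) (v : ι → V), P (c • v) ↔ P v) (hP₀ : ∀ v, P v → ∀ i, v i ≠ 0) :
    Nat.card {v : ι → V // P v} =
      Nat.card {σ : ι → ℙ K V // P fun i => (σ i).rep} * Nat.card Kˣ ^ Nat.card ι := by
  rw [← Nat.card_fun, ← Nat.card_prod]
  symm
  refine Nat.card_congr (Equiv.ofBijective
    (fun p => ⟨p.2 • fun i => (p.1.1 i).rep, (hP _ _).2 p.1.2⟩) ⟨?_, ?_⟩)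
  · rintro ⟨⟨σ, hσ⟩, c⟩ ⟨⟨τ, hτ⟩, d⟩ h
    have hrep : ∀ i, c i • (σ i).rep = d i • (τ i).rep := congrFun (congrArg Subtype.val h)
    obtain rfl : σ = τ := by
      funext i
      rw [← (σ i).mk_rep, ← (τ i).mk_rep, Projectivization.mk_eq_mk_iff]
      exact ⟨(c i)⁻¹ * d i, by rw [mul_smul, ← hrep i, inv_smul_smul]⟩
    obtain rfl : c = d :=
      funext fun i => Units.ext (smul_left_injective K (σ i).rep_nonzero (hrep i))
    rfl
  · rintro ⟨v, hv⟩
    choose c hc using fun i => Projectivization.exists_smul_eq_mk_rep K (v i) (hP₀ v hv i)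
    have hrep : (fun i => (Projectivization.mk K (v i) (hP₀ v hv i)).rep) = c • v :=
      funext fun i => (hc i).symm
    refine ⟨⟨⟨fun i => .mk K (v i) (hP₀ v hv i), ?_⟩, c⁻¹⟩, Subtype.ext ?_⟩
    · rw [hrep]
      exact (hP c v).2 hv
    · change c⁻¹ • (fun i => (Projectivization.mk K (v i) (hP₀ v hv i)).rep) = v
      rw [hrep, inv_smul_smul]

/-- The combinatorial conditions on the coplanar quadruples `D` and the collinear triples `L` of a
configuration of distinct points spanning projective 3-space under which `D` alone determines the
configuration: each pair extends to a non-coplanar quadruple, and a triple is collinear exactly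
when all quadruples containing it are coplanar. -/
structure DeterminesLines (D L : Finset ι → Prop) : Prop where
  exists_of_card_eq_two : ∀ s, s.card = 2 → ∃ t, s ⊆ t ∧ t.card = 4 ∧ ¬ D t
  line_iff : ∀ s, s.card = 3 → (L s ↔ ∀ t, s ⊆ t → t.card = 4 → D t)

end Projective

section Realization

variable {ι : Type*} {F : Type} [Field F] {σ : ι → ℙ F (Fin 4 → F)}

theorem collinear3_iff_not_linearIndepOn [DecidableEq ι] {a b c : ι}
    (hab : a ≠ b) (hac : a ≠ c) (hbc : b ≠ c) :
    Collinear3 F (σ a) (σ b) (σ c) ↔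
      ¬ LinearIndepOn F (fun i => (σ i).rep) ({a, b, c} : Finset ι) := by
  have hcard : ({a, b, c} : Finset ι).card = 3 :=
    Finset.card_eq_three.2 ⟨a, b, c, hab, hac, hbc, rfl⟩
  have hspan : Submodule.span F ((fun i => (σ i).rep) '' ({a, b, c} : Finset ι)) =
      (σ a).submodule ⊔ (σ b).submodule ⊔ (σ c).submodule := by
    simp only [Finset.coe_insert, Finset.coe_singleton, Set.image_insert_eq, Set.image_singleton,
      Submodule.span_insert, Projectivization.submodule_eq, sup_assoc]
  rw [linearIndepOn_iff_card_le_finrank, not_le, hcard, Nat.lt_succ_iff, Collinear3, hspan]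

theorem coplanar4_iff_not_linearIndepOn [DecidableEq ι] {a b c d : ι} (hab : a ≠ b) (hac : a ≠ c)
    (had : a ≠ d) (hbc : b ≠ c) (hbd : b ≠ d) (hcd : c ≠ d) :
    Coplanar4 F (σ a) (σ b) (σ c) (σ d) ↔
      ¬ LinearIndepOn F (fun i => (σ i).rep) ({a, b, c, d} : Finset ι) := by
  have hcard : ({a, b, c, d} : Finset ι).card = 4 :=
    Finset.card_eq_four.2 ⟨a, b, c, d, hab, hac, had, hbc, hbd, hcd, rfl⟩
  have hspan : Submodule.span F ((fun i => (σ i).rep) '' ({a, b, c, d} : Finset ι)) =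
      (σ a).submodule ⊔ (σ b).submodule ⊔ (σ c).submodule ⊔ (σ d).submodule := by
    simp only [Finset.coe_insert, Finset.coe_singleton, Set.image_insert_eq, Set.image_singleton,
      Submodule.span_insert, Projectivization.submodule_eq, sup_assoc]
  rw [linearIndepOn_iff_card_le_finrank, not_le, hcard, Nat.lt_succ_iff, Coplanar4, hspan]

theorem forall_coplanar4_iff_realizes [DecidableEq ι] {D : Finset ι → Prop} :
    (∀ a b c d : ι, a ≠ b → a ≠ c → a ≠ d → b ≠ c → b ≠ d → c ≠ d →
      (Coplanar4 F (σ a) (σ b) (σ c) (σ d) ↔ D {a, b, c, d})) ↔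
      Realizes F 4 D fun i => (σ i).rep := by
  constructor
  · intro h s hs
    obtain ⟨a, b, c, d, hab, hac, had, hbc, hbd, hcd, rfl⟩ := Finset.card_eq_four.1 hs
    rw [← coplanar4_iff_not_linearIndepOn hab hac had hbc hbd hcd]
    exact h a b c d hab hac had hbc hbd hcd
  · intro h a b c d hab hac had hbc hbd hcd
    rw [coplanar4_iff_not_linearIndepOn hab hac had hbc hbd hcd]
    exact h _ (Finset.card_eq_four.2 ⟨a, b, c, d, hab, hac, had, hbc, hbd, hcd, rfl⟩)

theorem Realizes.linearIndepOn_iff_of_determinesLines [Finite ι] {D L : Finset ι → Prop}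
    (hDL : DeterminesLines D L) {v : ι → Fin 4 → F} (h : Realizes F 4 D v) {s : Finset ι}
    (hs : 2 ≤ s.card) : LinearIndepOn F v s ↔ ∃ t, s ⊆ t ∧ t.card = 4 ∧ ¬ D t := by
  refine h.linearIndepOn_iff_exists_superset (Module.finrank_fin_fun F) ?_
  obtain ⟨s₂, -, hs₂⟩ := Finset.exists_subset_card_eq hs
  obtain ⟨t, -, ht⟩ := hDL.exists_of_card_eq_two s₂ hs₂
  exact ⟨t, ht⟩

theorem isRealization_iff_realizes [Finite ι] [DecidableEq ι] {D L : Finset ι → Prop}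
    (hDL : DeterminesLines D L) :
    (Function.Injective σ ∧
      (∀ a b c : ι, a ≠ b → a ≠ c → b ≠ c →
        (Collinear3 F (σ a) (σ b) (σ c) ↔ L {a, b, c})) ∧
      (∀ a b c d : ι, a ≠ b → a ≠ c → a ≠ d → b ≠ c → b ≠ d → c ≠ d →
        (Coplanar4 F (σ a) (σ b) (σ c) (σ d) ↔ D {a, b, c, d}))) ↔
      Realizes F 4 D fun i => (σ i).rep := by
  rw [forall_coplanar4_iff_realizes]
  refine ⟨fun h => h.2.2, fun h => ⟨fun a b hσ => ?_, fun a b c hab hac hbc => ?_, h⟩⟩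
  · by_contra hab
    have hcard := Finset.card_pair hab
    have hLI := (h.linearIndepOn_iff_of_determinesLines hDL hcard.ge).2
      (hDL.exists_of_card_eq_two _ hcard)
    exact hab (hLI.injOn (by simp) (by simp) (congrArg Projectivization.rep hσ))
  · have hcard := Finset.card_eq_three.2 ⟨a, b, c, hab, hac, hbc, rfl⟩
    rw [collinear3_iff_not_linearIndepOn hab hac hbc, hDL.line_iff _ hcard,
      h.linearIndepOn_iff_of_determinesLines hDL (hcard ▸ by norm_num)]
    push Not
    rfl

end Realization

section NormalForm

variable {n ι K V : Type*} [Finite n] [Field K] [AddCommGroup V] [Module K V]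

/-- The general linear group acts freely on the families whose part indexed by `b` is a basis, and
each orbit contains exactly one family in which this part is the basis `B`. -/
theorem card_eq_card_linearEquiv_mul_card_normalized (B : Module.Basis n K V) (b : n → ι)
    {P : (ι → V) → Prop} (hP : ∀ (g : V ≃ₗ[K] V) (v : ι → V), P (g ∘ v) ↔ P v)
    (hb : ∀ v, P v → LinearIndependent K (v ∘ b)) :
    Nat.card {v : ι → V // P v} =
      Nat.card (V ≃ₗ[K] V) * Nat.card {v : ι → V // P v ∧ v ∘ b = B} := by
  have := Fintype.ofFinite n
  have := Module.Finite.of_basis B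
  rw [← Nat.card_prod]
  symm
  refine Nat.card_congr (Equiv.ofBijective
    (fun p => ⟨p.1 ∘ p.2.1, (hP _ _).2 p.2.2.1⟩) ⟨?_, ?_⟩)
  · rintro ⟨g, v, hv, hvB⟩ ⟨g', v', hv', hvB'⟩ h
    replace h : g ∘ v = g' ∘ v' := congrArg Subtype.val h
    obtain rfl : g = g' := by
      refine B.ext' fun i => ?_
      rw [← congrFun hvB i]
      exact (congrFun h (b i)).trans (congrArg g' (congrFun (hvB'.trans hvB.symm) i))
    obtain rfl : v = v' := g.injective.comp_left h
    rfl
  · rintro ⟨v, hv⟩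
    cases isEmpty_or_nonempty n
    · refine ⟨⟨.refl K V, v, hv, Subsingleton.elim _ _⟩, rfl⟩
    let B' := basisOfLinearIndependentOfCardEqFinrank (hb v hv)
      (Module.finrank_eq_card_basis B).symm
    let g : V ≃ₗ[K] V := B'.equiv B (.refl n)
    refine ⟨⟨g.symm, g ∘ v, (hP _ _).2 hv, funext fun i => ?_⟩, Subtype.ext ?_⟩
    · have hB' : v (b i) = B' i :=
        (congrFun (coe_basisOfLinearIndependentOfCardEqFinrank (hb v hv) _) i).symm
      simp only [Function.comp_apply, hB', g, Module.Basis.equiv_apply, Equiv.refl_apply]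
    · funext i
      exact g.symm_apply_apply (v i)

theorem card_linearEquiv_fin_fun [Fintype K] (n : ℕ) :
    (Nat.card ((Fin n → K) ≃ₗ[K] (Fin n → K)) : ℤ) =
      ∏ i : Fin n, ((Fintype.card K : ℤ) ^ n - (Fintype.card K : ℤ) ^ (i : ℕ)) := by
  rw [Nat.card_congr (LinearMap.GeneralLinearGroup.generalLinearEquiv K _).symm.toEquiv,
    Nat.card_congr Matrix.GeneralLinearGroup.toLin.symm.toEquiv, Matrix.card_GL_field,
    Nat.cast_prod]
  refine Finset.prod_congr rfl fun i _ => ?_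
  rw [Nat.cast_sub (Nat.pow_le_pow_right Fintype.card_pos i.2.le), Nat.cast_pow, Nat.cast_pow]

variable {r : ℕ} {D : Finset ι → Prop}

theorem Realizes.linearIndependent_comp {v : ι → V} (h : Realizes K r D v) {b : Fin r ↪ ι}
    (hb : ¬ D (Finset.univ.map b)) : LinearIndependent K (v ∘ b) := by
  have hLI := (h.not_iff (by simp)).2 hb
  rw [Finset.coe_map, Finset.coe_univ, Set.image_univ] at hLI
  exact (linearIndepOn_range_iff b.injective v).1 hLI

theorem card_realizes_eq_card_linearEquiv_mul (b : Fin r ↪ ι) (hb : ¬ D (Finset.univ.map b)) :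
    Nat.card {v : ι → Fin r → K // Realizes K r D v} =
      Nat.card ((Fin r → K) ≃ₗ[K] (Fin r → K)) *
        Nat.card {v : ι → Fin r → K // Realizes K r D v ∧ ∀ i, v (b i) = Pi.single i 1} := by
  rw [card_eq_card_linearEquiv_mul_card_normalized (Pi.basisFun K (Fin r)) b
    (fun g _ => realizes_linearEquiv_comp_iff g) fun v hv => hv.linearIndependent_comp hb]
  simp only [funext_iff, Function.comp_apply, Pi.basisFun_apply]

end NormalForm

section Arc

variable {ι ι' K V : Type*} [Field K] [AddCommGroup V] [Module K V]

/-- Vector representatives of an arc: any `r` or fewer of the vectors are independent. The clause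
"or fewer" matters only for index types with fewer than `r` elements, on which the arcs are the
independent families. -/
def IsArc (K : Type*) {V ι : Type*} [Field K] [AddCommGroup V] [Module K V]
    (r : ℕ) (v : ι → V) : Prop :=
  ∀ s : Finset ι, s.card ≤ r → LinearIndepOn K v s

theorem realizes_false_iff_isArc [Fintype ι] {r : ℕ} (hr : r ≤ Fintype.card ι) {v : ι → V} :
    Realizes K r (fun _ => False) v ↔ IsArc K r v := by
  refine ⟨fun h s hs => ?_, fun h s hs => iff_false_intro (not_not.2 (h s hs.le))⟩
  obtain ⟨t, hst, ht⟩ := Finset.exists_superset_card_eq hs hr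
  exact ((h.not_iff ht).2 id).mono (Finset.coe_subset.2 hst)

theorem isArc_units_smul_iff {r : ℕ} {v : ι → V} (c : ι → Kˣ) :
    IsArc K r (c • v) ↔ IsArc K r v := by
  simp only [IsArc, linearIndepOn_units_smul_iff]

theorem isArc_linearEquiv_comp_iff {r : ℕ} {v : ι → V} (g : V ≃ₗ[K] V) :
    IsArc K r (g ∘ v) ↔ IsArc K r v := by
  simp only [IsArc, linearIndepOn_linearEquiv_comp_iff]

theorem isArc_comp_equiv_iff {r : ℕ} {v : ι → V} (e : ι' ≃ ι) :
    IsArc K r (v ∘ e) ↔ IsArc K r v := by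
  rw [IsArc, IsArc, ← e.finsetCongr.forall_congr_right]
  simp only [Equiv.finsetCongr_apply, Finset.card_map, Finset.coe_map, Equiv.coe_toEmbedding,
    linearIndepOn_equiv]

theorem card_isArc_congr {r : ℕ} (e : ι ≃ ι') :
    Nat.card {v : ι → V // IsArc K r v} = Nat.card {v : ι' → V // IsArc K r v} :=
  Nat.card_congr ((e.arrowCongr (.refl V)).subtypeEquiv fun _ =>
    (isArc_comp_equiv_iff e.symm).symm)

theorem IsArc.linearIndependent_comp {n : Type*} [Fintype n] {r : ℕ} {v : ι → V}
    (h : IsArc K r v) (b : n ↪ ι) (hr : Fintype.card n ≤ r) : LinearIndependent K (v ∘ b) := by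
  have hLI := h (Finset.univ.map b) (by simpa using hr)
  rw [Finset.coe_map, Finset.coe_univ, Set.image_univ] at hLI
  exact (linearIndepOn_range_iff b.injective v).1 hLI

end Arc

section Duality

variable {ι m n K : Type*} [Field K]

/-- The family of `n ⊕ m` vectors of `K ^ n` made of the standard basis and the rows of `A`. -/
def systematic [DecidableEq n] (A : m → n → K) : n ⊕ m → n → K :=
  Sum.elim (fun i => Pi.single i 1) A

/-- The Gale dual of `systematic A`: its linear relations are the vectors
`k ↦ systematic A k ⬝ᵥ x`. -/
def galeDual [DecidableEq m] (A : m → n → K) : n ⊕ m → m → K :=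
  Sum.elim (fun i j => -A j i) fun j => Pi.single j 1

theorem galeDual_eq_systematic_comp_swap [DecidableEq m] (A : m → n → K) :
    galeDual A = systematic (fun i j => -A j i) ∘ Sum.swap := by
  funext k
  cases k <;> rfl

variable [Fintype n]

theorem linearIndepOn_iff_forall_dotProduct_eq_zero {v : ι → n → K} {s : Finset ι}
    (hs : s.card = Fintype.card n) :
    LinearIndepOn K v s ↔ ∀ x : n → K, (∀ k ∈ s, v k ⬝ᵥ x = 0) → x = 0 := by
  classical
  let e : n ≃ s := Fintype.equivOfCardEq (by rw [Fintype.card_coe, hs])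
  let M : Matrix n n K := Matrix.of fun i => v (e i)
  have hrows : LinearIndepOn K v s ↔ LinearIndependent K M.row :=
    (linearIndependent_equiv e (f := fun i : s => v i)).symm
  rw [hrows, Matrix.linearIndependent_rows_iff_isUnit, ← Matrix.mulVec_injective_iff_isUnit,
    ← Matrix.coe_mulVecLin, injective_iff_map_eq_zero]
  refine forall_congr' fun x => imp_congr_left ?_
  rw [Matrix.mulVecLin_apply, funext_iff, e.forall_congr_left]
  simp [M, Matrix.mulVec]

variable [DecidableEq n]

theorem card_isArc_eq_mul_card_systematic :
    Nat.card {v : n ⊕ m → n → K // IsArc K (Fintype.card n) v} =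
      Nat.card ((n → K) ≃ₗ[K] (n → K)) *
        Nat.card {A : m → n → K // IsArc K (Fintype.card n) (systematic A)} := by
  rw [card_eq_card_linearEquiv_mul_card_normalized (Pi.basisFun K n) Sum.inl
    (fun g _ => isArc_linearEquiv_comp_iff g)
    fun v hv => hv.linearIndependent_comp .inl le_rfl]
  congr 1
  refine Nat.card_congr (Equiv.ofBijective (fun A : {A : m → n → K // _} =>
    ⟨systematic A.1, A.2, funext fun i => by simp [systematic]⟩) ⟨?_, ?_⟩).symm
  · intro A A' h
    exact Subtype.ext (congrArg (· ∘ Sum.inr) (congrArg Subtype.val h))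
  · rintro ⟨v, hv, hvb⟩
    have hsys : systematic (v ∘ Sum.inr) = v := by
      rw [← Sum.elim_comp_inl_inr v, hvb]
      simp [systematic, funext_iff]
    exact ⟨⟨v ∘ Sum.inr, by rwa [hsys]⟩, Subtype.ext hsys⟩

variable [Fintype m] [DecidableEq m]

theorem sum_smul_galeDual_eq_zero_iff (A : m → n → K) (c : n ⊕ m → K) :
    ∑ k, c k • galeDual A k = 0 ↔ c = fun k => systematic A k ⬝ᵥ (c ∘ Sum.inl) := by
  have hgale (j : m) : (∑ k, c k • galeDual A k) j =
      c (Sum.inr j) - ∑ i, A j i * c (Sum.inl i) := by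
    simp [galeDual, Pi.single_apply, sub_eq_neg_add, mul_comm]
  have hinl (i : n) : systematic A (Sum.inl i) ⬝ᵥ (c ∘ Sum.inl) = c (Sum.inl i) := by
    simp [systematic]
  simp only [funext_iff, hgale, Pi.zero_apply, sub_eq_zero, Sum.forall, hinl, implies_true,
    true_and]
  rfl

theorem linearIndepOn_galeDual_iff_compl (A : m → n → K) {s : Finset (n ⊕ m)}
    (hs : sᶜ.card = Fintype.card n) :
    LinearIndepOn K (galeDual A) s ↔ LinearIndepOn K (systematic A) (sᶜ : Finset (n ⊕ m)) := by
  rw [linearIndepOn_iff_forall_dotProduct_eq_zero hs, linearIndepOn_finset_iff]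
  have hsum : ∀ c : n ⊕ m → K, (∀ k ∉ s, c k = 0) →
      ∑ k ∈ s, c k • galeDual A k = ∑ k, c k • galeDual A k := fun c hc =>
    Finset.sum_subset (Finset.subset_univ s) fun k _ hk => by rw [hc k hk, zero_smul]
  constructor
  · intro h x hx
    let c : n ⊕ m → K := fun k => systematic A k ⬝ᵥ x
    have hcx : c ∘ Sum.inl = x := funext fun i => by simp [c, systematic]
    have hc : ∀ k ∉ s, c k = 0 := fun k hk => hx k (Finset.mem_compl.2 hk)
    have hc₀ := h c (by rw [hsum c hc, sum_smul_galeDual_eq_zero_iff, hcx])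
    rw [← hcx]
    exact funext fun i => by_cases (hc₀ _) (hc _)
  · intro h c hc k hk
    let c' : n ⊕ m → K := fun k => if k ∈ s then c k else 0
    have hc' : ∀ k ∉ s, c' k = 0 := fun k hk => if_neg hk
    have hrel : c' = fun k => systematic A k ⬝ᵥ (c' ∘ Sum.inl) := by
      rw [← sum_smul_galeDual_eq_zero_iff, ← hsum c' hc', ← hc]
      exact Finset.sum_congr rfl fun k hk => by rw [show c' k = c k from if_pos hk]
    have hx := h (c' ∘ Sum.inl) fun k hk => by
      rw [← congrFun hrel k, hc' k (Finset.mem_compl.1 hk)]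
    rw [← show c' k = c k from if_pos hk, congrFun hrel k, hx, dotProduct_zero]

theorem isArc_galeDual_iff (A : m → n → K) :
    IsArc K (Fintype.card m) (galeDual A) ↔ IsArc K (Fintype.card n) (systematic A) := by
  rw [← realizes_false_iff_isArc (by simp), ← realizes_false_iff_isArc (by simp), Realizes,
    Realizes, ← (compl_involutive (α := Finset (n ⊕ m))).toPerm.forall_congr_right]
  refine forall_congr' fun s => ?_
  have hcard : s.card + sᶜ.card = Fintype.card n + Fintype.card m := by
    rw [Finset.card_add_card_compl, Fintype.card_sum]
  simp only [Function.Involutive.coe_toPerm]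
  by_cases hs : s.card = Fintype.card n
  · rw [linearIndepOn_galeDual_iff_compl A (by rw [compl_compl, hs]), compl_compl]
    simp only [hs, show sᶜ.card = Fintype.card m by omega]
  · simp only [hs, show sᶜ.card ≠ Fintype.card m by omega, false_imp_iff]

theorem card_isArc_systematic_eq :
    Nat.card {A : m → n → K // IsArc K (Fintype.card n) (systematic A)} =
      Nat.card {B : n → m → K // IsArc K (Fintype.card m) (systematic B)} := by
  let e : (m → n → K) ≃ (n → m → K) := (Equiv.piComm _).trans (.neg _)
  refine Nat.card_congr (e.subtypeEquiv fun A => ?_)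
  rw [← isArc_galeDual_iff, galeDual_eq_systematic_comp_swap]
  exact isArc_comp_equiv_iff (Equiv.sumComm n m)

end Duality

theorem card_isArc_mul_card_linearEquiv_comm {m n K : Type*} [Fintype m] [Fintype n] [Field K] :
    Nat.card {v : n ⊕ m → n → K // IsArc K (Fintype.card n) v} *
        Nat.card ((m → K) ≃ₗ[K] (m → K)) =
      Nat.card {v : n ⊕ m → m → K // IsArc K (Fintype.card m) v} *
        Nat.card ((n → K) ≃ₗ[K] (n → K)) := by
  classical
  rw [card_isArc_congr (V := m → K) (Equiv.sumComm n m), card_isArc_eq_mul_card_systematic,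
    card_isArc_eq_mul_card_systematic, card_isArc_systematic_eq]
  ring

section Extension

variable {ι K V : Type*} [Field K] [AddCommGroup V] [Module K V]

theorem linearIndepOn_insertNone_iff {v : Option ι → V} {s : Finset ι} :
    LinearIndepOn K v (Finset.insertNone s : Finset (Option ι)) ↔
      LinearIndepOn K (v ∘ some) s ∧ v none ∉ Submodule.span K (v ∘ some '' s) := by
  have hcoe : ((Finset.insertNone s : Finset (Option ι)) : Set (Option ι)) =
      insert none (some '' s) := by
    ext a
    cases a <;> simp
  rw [hcoe, linearIndepOn_insert (by simp), ← Set.image_comp]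
  exact and_congr_left' ⟨fun h => h.comp_of_image (Option.some_injective ι).injOn,
    LinearIndepOn.image_of_comp _ _⟩

theorem isArc_option_iff {r : ℕ} {v : Option ι → V} :
    IsArc K (r + 1) v ↔ IsArc K (r + 1) (v ∘ some) ∧
      ∀ s : Finset ι, s.card ≤ r → v none ∉ Submodule.span K (v ∘ some '' s) := by
  refine ⟨fun h => ⟨fun s hs => ?_, fun s hs => ?_⟩, fun ⟨h, hnone⟩ t ht => ?_⟩
  · have hLI := h (s.map .some) (by rwa [Finset.card_map])
    rw [Finset.coe_map] at hLI
    exact hLI.comp_of_image (Option.some_injective ι).injOn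
  · exact (linearIndepOn_insertNone_iff.1
      (h _ (by rw [Finset.card_insertNone]; omega))).2
  · classical
    by_cases hmem : none ∈ t
    · rw [← Finset.insert_eq_of_mem hmem, ← Finset.insertNone_eraseNone] at ht ⊢
      rw [Finset.card_insertNone] at ht
      exact linearIndepOn_insertNone_iff.2 ⟨h _ (by omega), hnone _ (by omega)⟩
    · rw [← Finset.erase_eq_of_notMem hmem, ← Finset.map_some_eraseNone] at ht ⊢
      rw [Finset.card_map] at ht
      rw [Finset.coe_map]
      exact (h _ ht).image_of_comp

theorem card_isArc_option [Finite V] (r : ℕ)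
    [Fintype {v : ι → V // IsArc K (r + 1) v}] :
    Nat.card {v : Option ι → V // IsArc K (r + 1) v} =
      ∑ v : {v : ι → V // IsArc K (r + 1) v},
        Nat.card {w : V // ∀ s : Finset ι, s.card ≤ r → w ∉ Submodule.span K (v.1 '' s)} := by
  rw [← Nat.card_sigma]
  exact Nat.card_congr
    { toFun v := ⟨⟨v.1 ∘ some, (isArc_option_iff.1 v.2).1⟩, v.1 none, (isArc_option_iff.1 v.2).2⟩
      invFun p := ⟨fun i => i.elim p.2.1 p.1.1, isArc_option_iff.2 ⟨p.1.2, p.2.2⟩⟩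
      left_inv v := Subtype.ext (funext fun i => by cases i <;> rfl)
      right_inv p := rfl }

theorem span_image_inf_span_image [DecidableEq ι] {v : ι → V} {s t : Finset ι}
    (h : LinearIndepOn K v (s ∪ t : Finset ι)) :
    Submodule.span K (v '' s) ⊓ Submodule.span K (v '' t) =
      Submodule.span K (v '' (s ∩ t : Finset ι)) := by
  have hs : LinearIndepOn K v s := h.mono (by simp)
  have ht : LinearIndepOn K v t := h.mono (by simp)
  have hst : LinearIndepOn K v (s ∩ t : Finset ι) := hs.mono (by simp)
  have (u : Finset ι) : FiniteDimensional K (Submodule.span K (v '' u)) :=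
    FiniteDimensional.span_of_finite K (u.finite_toSet.image v)
  refine (Submodule.eq_of_le_of_finrank_le ?_ ?_).symm
  · exact le_inf (Submodule.span_mono (Set.image_mono (by simp)))
      (Submodule.span_mono (Set.image_mono (by simp)))
  · have hsup := Submodule.finrank_sup_add_finrank_inf_eq
      (Submodule.span K (v '' s)) (Submodule.span K (v '' t))
    rw [← Submodule.span_union, ← Set.image_union, ← Finset.coe_union,
      finrank_span_image_eq_card h, finrank_span_image_eq_card hs,
      finrank_span_image_eq_card ht] at hsup
    rw [finrank_span_image_eq_card hst]
    have := Finset.card_union_add_card_inter s t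
    omega

end Extension

theorem natCast_card_units (K : Type*) [DivisionRing K] [Fintype K] :
    (Nat.card Kˣ : ℤ) = Fintype.card K - 1 := by
  rw [Nat.card_units, Nat.card_eq_fintype_card, Nat.cast_pred Fintype.card_pos]

theorem mem_span_singleton_iff_exists_units {K V : Type*} [DivisionRing K] [AddCommGroup V]
    [Module K V] {v w : V} (hw : w ≠ 0) : w ∈ Submodule.span K {v} ↔ ∃ c : Kˣ, c • v = w := by
  rw [Submodule.mem_span_singleton]
  refine ⟨fun ⟨c, hc⟩ => ⟨.mk0 c ?_, hc⟩, fun ⟨c, hc⟩ => ⟨c, hc⟩⟩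
  rintro rfl
  exact hw (by rw [← hc, zero_smul])

section PlaneArcs

variable {ι K V : Type*} [Field K] [AddCommGroup V] [Module K V]

/-- The nonzero vectors that are not multiples of a vector of the family `v`, that is, the vectors
representing a point other than those of `v`. -/
def offPoints (K : Type*) {V ι : Type*} [Field K] [AddCommGroup V] [Module K V]
    (v : ι → V) : Set V :=
  {w | w ≠ 0 ∧ ∀ i, w ∉ Submodule.span K {v i}}

/-- The vectors representing a point outside `v` that is common to all secants (lines joining two
points of `v`) in `T`; a secant is given by the pair of indices of the points it joins. -/
def secantMeet (K : Type*) {V ι : Type*} [Field K] [AddCommGroup V] [Module K V]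
    (v : ι → V) (T : Finset (Finset ι)) : Set V :=
  {w ∈ offPoints K v | ∀ s ∈ T, w ∈ Submodule.span K (v '' s)}

theorem forall_card_le_two_notMem_span_iff {v : ι → V} {w : V} :
    (∀ s : Finset ι, s.card ≤ 2 → w ∉ Submodule.span K (v '' s)) ↔
      w ∈ offPoints K v ∧ ∀ s : Finset ι, s.card = 2 → w ∉ Submodule.span K (v '' s) := by
  refine ⟨fun h => ⟨⟨?_, fun i => ?_⟩, fun s hs => h s hs.le⟩, fun ⟨⟨h₀, h₁⟩, h₂⟩ s hs => ?_⟩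
  · simpa using h ∅ (by simp)
  · simpa using h {i} (by simp)
  · interval_cases hcard : s.card
    · simpa [Finset.card_eq_zero.1 hcard] using h₀
    · obtain ⟨i, rfl⟩ := Finset.card_eq_one.1 hcard
      simpa using h₁ i
    · exact h₂ s hcard

theorem card_off_secants_eq_sum [Fintype ι] [Finite V] (v : ι → V) :
    (Nat.card {w : V // ∀ s : Finset ι, s.card ≤ 2 → w ∉ Submodule.span K (v '' s)} : ℤ) =
      ∑ T ∈ (Finset.powersetCard 2 (Finset.univ : Finset ι)).powerset,
        (-1) ^ T.card * (Nat.card (secantMeet K v T) : ℤ) := by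
  classical
  have := Fintype.ofFinite V
  let onSecant (s : Finset ι) : Finset (offPoints K v) := {w | w.1 ∈ Submodule.span K (v '' s)}
  have hsub (q : V → Prop) (A : Finset (offPoints K v)) (hA : ∀ w, w ∈ A ↔ q w.1) :
      Nat.card {w // w ∈ offPoints K v ∧ q w} = A.card := by
    rw [← Nat.card_congr (Equiv.subtypeSubtypeEquivSubtypeInter (· ∈ offPoints K v) q),
      ← Nat.card_eq_finsetCard]
    exact Nat.card_congr (Equiv.subtypeEquivRight fun w => (hA w).symm)
  have hoff := hsub (fun w => ∀ s : Finset ι, s.card = 2 → w ∉ Submodule.span K (v '' s))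
    ((Finset.powersetCard 2 Finset.univ).inf fun s => (onSecant s)ᶜ)
    fun w => by simp [Finset.mem_inf, onSecant]
  have hmeet (T : Finset (Finset ι)) : Nat.card (secantMeet K v T) = (T.inf onSecant).card :=
    hsub (fun w => ∀ s ∈ T, w ∈ Submodule.span K (v '' s)) _
      fun w => by simp [Finset.mem_inf, onSecant]
  simp only [forall_card_le_two_notMem_span_iff]
  rw [hoff, Finset.inclusion_exclusion_card_inf_compl]
  simp only [hmeet]

variable {v : ι → V} {T : Finset (Finset ι)}

theorem pairwiseDisjoint_of_secantMeet_nonempty (hv : IsArc K 3 v) (hT : ∀ s ∈ T, s.card = 2)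
    (h : (secantMeet K v T).Nonempty) : (T : Set (Finset ι)).PairwiseDisjoint id := by
  classical
  obtain ⟨w, ⟨_, hw⟩, hwT⟩ := h
  intro s hs t ht hst
  by_contra hdisj
  have hcard := Finset.card_union_add_card_inter s t
  rw [hT s hs, hT t ht] at hcard
  have hpos : 0 < (s ∩ t).card := by
    rwa [Finset.card_pos, ← Finset.not_disjoint_iff_nonempty_inter]
  have hlt : (s ∩ t).card < 2 := by
    by_contra! hge
    have hs' := Finset.eq_of_subset_of_card_le Finset.inter_subset_left (hT s hs ▸ hge)
    have ht' := Finset.eq_of_subset_of_card_le Finset.inter_subset_right (hT t ht ▸ hge)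
    exact hst (hs'.symm.trans ht')
  obtain ⟨i, hi⟩ := Finset.card_eq_one.1 (show (s ∩ t).card = 1 by omega)
  have hwi : w ∈ Submodule.span K (v '' (s ∩ t : Finset ι)) := by
    rw [← span_image_inf_span_image (hv _ (by omega))]
    exact ⟨hwT s hs, hwT t ht⟩
  rw [hi, Finset.coe_singleton, Set.image_singleton] at hwi
  exact hw i hwi

theorem IsArc.notMem_span {r : ℕ} (hv : IsArc K (r + 1) v) {s : Finset ι} (hs : s.card ≤ r) {i : ι}
    (hi : i ∉ s) : v i ∉ Submodule.span K (v '' s) := by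
  classical
  refine LinearIndepOn.notMem_span_of_insert ?_ (Finset.mem_coe.not.2 hi)
  rw [← Finset.coe_insert]
  exact hv _ ((Finset.card_insert_le i s).trans (Nat.succ_le_succ hs))

theorem IsArc.units_smul_add_units_smul_mem_offPoints (hv : IsArc K 3 v) {i j : ι} (hij : i ≠ j)
    (a b : Kˣ) : a • v i + b • v j ∈ offPoints K v := by
  classical
  have key : ∀ {i j : ι}, i ≠ j → ∀ a b : Kˣ, ∀ l ≠ j,
      a • v i + b • v j ∉ Submodule.span K {v l} := by
    intro i j hij a b l hlj hmem
    refine hv.notMem_span (s := {i, l}) (i := j) Finset.card_le_two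
      (by simp [hij.symm, hlj.symm]) ?_
    have hi : a • v i ∈ Submodule.span K {v i, v l} :=
      Submodule.smul_mem _ _ (Submodule.mem_span_of_mem (by simp))
    have hil := Submodule.span_mono (by simp) hmem (t := {v i, v l})
    rw [Submodule.add_mem_iff_right _ hi] at hil
    simpa [Set.image_insert_eq] using (Submodule.smul_mem_iff' _ b).1 hil
  have hspan (l : ι) : a • v i + b • v j ∉ Submodule.span K {v l} := by
    obtain hlj | rfl := ne_or_eq l j
    · exact key hij a b l hlj
    · rw [add_comm]
      exact key hij.symm b a l hij.symm
  exact ⟨fun h => hspan i (h ▸ zero_mem _), hspan⟩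

theorem exists_units_of_mem_secantMeet [DecidableEq ι] {w : V} (hw : w ∈ secantMeet K v T) {i j : ι}
    (hT : {i, j} ∈ T) : ∃ a b : Kˣ, a • v i + b • v j = w := by
  have hspan := hw.2 _ hT
  rw [Finset.coe_pair, Set.image_pair, Submodule.mem_span_pair] at hspan
  obtain ⟨a, b, rfl⟩ := hspan
  have ha : a ≠ 0 := by
    rintro rfl
    exact hw.1.2 j (by simpa using Submodule.smul_mem _ b (Submodule.mem_span_singleton_self _))
  have hb : b ≠ 0 := by
    rintro rfl
    exact hw.1.2 i (by simpa using Submodule.smul_mem _ a (Submodule.mem_span_singleton_self _))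
  exact ⟨.mk0 a ha, .mk0 b hb, rfl⟩

theorem IsArc.smul_add_smul_inj {r : ℕ} (hv : IsArc K (r + 2) v) {i j : ι} (hij : i ≠ j)
    {a b a' b' : K} (h : a • v i + b • v j = a' • v i + b' • v j) : a = a' ∧ b = b' := by
  classical
  have hLI := hv {i, j} (Finset.card_le_two.trans (by omega))
  rw [Finset.coe_pair, LinearIndepOn.pair_iff v hij] at hLI
  have hsub : (a - a') • v i + (b - b') • v j = 0 := by
    rw [sub_smul, sub_smul, sub_add_sub_comm, h, sub_self]
  exact (hLI _ _ hsub).imp sub_eq_zero.1 sub_eq_zero.1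

theorem card_secantMeet_empty [Fintype K] [Fintype ι] [FiniteDimensional K V] (hv : IsArc K 3 v) :
    (Nat.card (secantMeet K v ∅) : ℤ) =
      (Fintype.card K : ℤ) ^ Module.finrank K V - 1 - Fintype.card ι * (Fintype.card K - 1) := by
  have := Module.finite_of_finite K (M := V)
  have hv₀ (i : ι) : v i ≠ 0 := by
    simpa using hv.notMem_span (s := ∅) (by simp) (i := i) (by simp)
  let f : Option (ι × Kˣ) → V := fun p => p.elim 0 fun p => p.2 • v p.1
  have hf : Function.Injective f := by
    refine Option.injective_iff.2 ⟨?_, ?_⟩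
    · rintro ⟨i, c⟩ ⟨j, d⟩ h
      obtain rfl : i = j := by
        by_contra hij
        refine hv.notMem_span (s := {j}) (by simp) (by simpa using hij)
          ((Submodule.smul_mem_iff' _ c).1 (?_ : c • v i ∈ _))
        rw [show c • v i = d • v j from h]
        exact Submodule.smul_mem _ _ (Submodule.mem_span_of_mem (by simp))
      exact Prod.ext rfl (Units.ext (smul_left_injective K (hv₀ i) h))
    · rintro ⟨⟨i, c⟩, h⟩
      exact hv₀ i ((smul_eq_zero_iff_eq c).1 h)
  have hrange : secantMeet K v ∅ = (Set.range f)ᶜ := by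
    ext w
    by_cases hw : w = 0
    · simp [secantMeet, offPoints, f, hw, Option.exists]
    · simp [secantMeet, offPoints, f, hw, mem_span_singleton_iff_exists_units hw, Option.forall,
        Ne.symm hw]
  have hcard := Set.ncard_add_ncard_compl (Set.range f)
  rw [← hrange, Set.ncard_range_of_injective hf, Module.natCard_eq_pow_finrank (K := K) (V := V),
    ← Nat.card_coe_set_eq, Finite.card_option, Nat.card_prod] at hcard
  rw [← natCast_card_units, ← Nat.card_eq_fintype_card, ← Nat.card_eq_fintype_card]
  zify at hcard
  linear_combination hcard

theorem card_secantMeet_singleton (hv : IsArc K 3 v) {s : Finset ι} (hs : s.card = 2) :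
    Nat.card (secantMeet K v {s}) = Nat.card Kˣ ^ 2 := by
  classical
  obtain ⟨i, j, hij, rfl⟩ := Finset.card_eq_two.1 hs
  have hmem (c : Kˣ × Kˣ) : c.1 • v i + c.2 • v j ∈ secantMeet K v {{i, j}} := by
    refine ⟨hv.units_smul_add_units_smul_mem_offPoints hij c.1 c.2, fun s hs => ?_⟩
    rw [Finset.mem_singleton.1 hs, Finset.coe_pair, Set.image_pair]
    exact Submodule.mem_span_pair.2 ⟨c.1, c.2, rfl⟩
  rw [sq, ← Nat.card_prod]
  refine (Nat.card_congr (Equiv.ofBijective (fun c =>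
    (⟨_, hmem c⟩ : secantMeet K v {{i, j}})) ⟨fun c c' h => ?_, fun w => ?_⟩)).symm
  · obtain ⟨h₁, h₂⟩ := hv.smul_add_smul_inj hij (congrArg Subtype.val h)
    exact Prod.ext (Units.ext h₁) (Units.ext h₂)
  · obtain ⟨a, b, hab⟩ := exists_units_of_mem_secantMeet w.2 (Finset.mem_singleton_self _)
    exact ⟨(a, b), Subtype.ext hab⟩

theorem secantMeet_pair_eq (hv : IsArc K 3 v) [DecidableEq ι] {s t : Finset ι} (hs : s.card = 2)
    (ht : t.card = 2) (hst : Disjoint s t) :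
    secantMeet K v {s, t} =
      ((Submodule.span K (v '' s) ⊓ Submodule.span K (v '' t) : Submodule K V) : Set V) \ {0} := by
  ext w
  simp only [secantMeet, Finset.mem_insert, Finset.mem_singleton, forall_eq_or_imp, forall_eq,
    Set.mem_sdiff, SetLike.mem_coe, Submodule.mem_inf, Set.mem_ofPred_eq, Set.mem_singleton_iff]
  refine ⟨fun ⟨⟨h₀, _⟩, h⟩ => ⟨h, h₀⟩, fun ⟨h, h₀⟩ => ⟨⟨h₀, fun l hl => h₀ ?_⟩, h⟩⟩
  have key {u : Finset ι} (hu : u.card = 2) (hw : w ∈ Submodule.span K (v '' u)) (hl' : l ∉ u) :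
      w = 0 := by
    have hdisj : Disjoint u {l} := Finset.disjoint_singleton_right.2 hl'
    have hlu : w ∈ Submodule.span K (v '' u) ⊓ Submodule.span K (v '' ({l} : Finset ι)) :=
      ⟨hw, by simpa using hl⟩
    rw [span_image_inf_span_image (hv _ (by rw [Finset.card_union_of_disjoint hdisj, hu]; simp)),
      Finset.disjoint_iff_inter_eq_empty.1 hdisj] at hlu
    simpa using hlu
  by_cases hls : l ∈ s
  · exact key ht h.2 (Finset.disjoint_left.1 hst hls)
  · exact key hs h.1 hls

theorem card_secantMeet_pair [Fintype K] [FiniteDimensional K V] (hV : Module.finrank K V = 3)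
    (hv : IsArc K 3 v) [DecidableEq ι] {s t : Finset ι} (hs : s.card = 2) (ht : t.card = 2)
    (hst : Disjoint s t) : (Nat.card (secantMeet K v {s, t}) : ℤ) = Fintype.card K - 1 := by
  have hrank {u : Finset ι} (hu : u.card ≤ 3) :
      Module.finrank K (Submodule.span K (v '' u)) = u.card := finrank_span_image_eq_card (hv u hu)
  have hsup : Module.finrank K ↥(Submodule.span K (v '' s) ⊔ Submodule.span K (v '' t)) = 3 := by
    refine le_antisymm (hV ▸ Submodule.finrank_le _) ?_
    obtain ⟨j, hj⟩ := Finset.card_pos.1 (ht ▸ two_pos)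
    have hjs : (insert j s).card = 3 := by
      rw [Finset.card_insert_of_notMem (Finset.disjoint_right.1 hst hj), hs]
    rw [← hjs, ← hrank hjs.le, ← Submodule.span_union, ← Set.image_union]
    refine Submodule.finrank_mono (Submodule.span_mono (Set.image_mono ?_))
    rw [Finset.coe_insert]
    exact Set.insert_subset (.inr hj) Set.subset_union_left
  have hinf := Submodule.finrank_sup_add_finrank_inf_eq
    (Submodule.span K (v '' s)) (Submodule.span K (v '' t))
  rw [hsup, hrank (by omega), hrank (by omega), hs, ht] at hinf
  rw [secantMeet_pair_eq hv hs ht hst, Nat.card_coe_set_eq,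
    Set.ncard_sdiff_singleton_of_mem (zero_mem _), ← Nat.card_coe_set_eq, SetLike.coe_sort_coe,
    Module.natCard_eq_pow_finrank (K := K),
    show Module.finrank K _ = 1 by omega, pow_one, ← Nat.card_units, natCast_card_units]

end PlaneArcs

theorem two_mul_card_le_of_pairwiseDisjoint {ι : Type*} [Fintype ι]
    {T : Finset (Finset ι)} (hT : ∀ s ∈ T, s.card = 2)
    (hd : (T : Set (Finset ι)).PairwiseDisjoint id) : 2 * T.card ≤ Fintype.card ι := by
  classical
  have hcard := Finset.card_biUnion hd
  simp only [id, Finset.sum_congr rfl hT, Finset.sum_const, smul_eq_mul] at hcard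
  rw [mul_comm, ← hcard]
  exact Finset.card_le_univ _

section PlaneArcExtension

variable {ι K V : Type*} [Fintype ι] [DecidableEq ι] [Field K] [AddCommGroup V] [Module K V]

/-- The sets of `j` pairwise disjoint pairs of elements of `ι`, the only sets of secants of a plane
arc that can meet in a point outside the arc. -/
def matchings (ι : Type*) [Fintype ι] [DecidableEq ι] (j : ℕ) : Finset (Finset (Finset ι)) :=
  {T ∈ Finset.powersetCard j (Finset.powersetCard 2 Finset.univ) |
    ∀ s ∈ T, ∀ t ∈ T, s ≠ t → Disjoint s t}

theorem mem_matchings {j : ℕ} {T : Finset (Finset ι)} :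
    T ∈ matchings ι j ↔
      T.card = j ∧ (∀ s ∈ T, s.card = 2) ∧ (T : Set (Finset ι)).PairwiseDisjoint id := by
  simp only [matchings, Finset.mem_filter, Finset.mem_powersetCard, Finset.subset_iff,
    Finset.mem_univ, implies_true, true_and]
  exact ⟨fun ⟨⟨h₂, hj⟩, hd⟩ => ⟨hj, h₂, fun s hs t ht => hd s hs t ht⟩,
    fun ⟨hj, h₂, hd⟩ => ⟨⟨h₂, hj⟩, fun s hs t ht => hd hs ht⟩⟩

theorem card_off_secants_eq_sum_matchings [Finite V] {v : ι → V} (hv : IsArc K 3 v) {n : ℕ}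
    (hn : Fintype.card ι < 2 * n) :
    (Nat.card {w : V // ∀ s : Finset ι, s.card ≤ 2 → w ∉ Submodule.span K (v '' s)} : ℤ) =
      ∑ j ∈ Finset.range n,
        (-1) ^ j * ∑ T ∈ matchings ι j, (Nat.card (secantMeet K v T) : ℤ) := by
  classical
  have hpair {T : Finset (Finset ι)} (hT : T ∈ (Finset.powersetCard 2 Finset.univ).powerset) :
      ∀ s ∈ T, s.card = 2 := fun s hs =>
    (Finset.mem_powersetCard.1 (Finset.mem_powerset.1 hT hs)).2
  have hne (T) (hT : T ∈ (Finset.powersetCard 2 Finset.univ).powerset)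
      (h : (-1) ^ T.card * (Nat.card (secantMeet K v T) : ℤ) ≠ 0) :
      (T : Set (Finset ι)).PairwiseDisjoint id := by
    refine pairwiseDisjoint_of_secantMeet_nonempty hv (hpair hT) ?_
    rw [Set.nonempty_iff_ne_empty]
    intro hempty
    simp [hempty] at h
  rw [card_off_secants_eq_sum, ← Finset.sum_filter_of_ne hne,
    ← Finset.sum_fiberwise_of_maps_to (t := Finset.range n) (g := Finset.card)]
  · refine Finset.sum_congr rfl fun j _ => ?_
    rw [Finset.mul_sum]
    refine Finset.sum_congr ?_ fun T hT => by rw [(mem_matchings.1 hT).1]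
    ext T
    simp only [Finset.mem_filter, mem_matchings, Finset.mem_powerset, Finset.subset_iff,
      Finset.mem_powersetCard, Finset.mem_univ, implies_true, true_and]
    tauto
  · intro T hT
    obtain ⟨hT, hd⟩ := Finset.mem_filter.1 hT
    have := two_mul_card_le_of_pairwiseDisjoint (hpair hT) hd
    exact Finset.mem_range.2 (by omega)

theorem card_off_secants [Fintype K] [FiniteDimensional K V] (hV : Module.finrank K V = 3)
    {v : ι → V} (hv : IsArc K 3 v) (hι : Fintype.card ι < 8) :
    (Nat.card {w : V // ∀ s : Finset ι, s.card ≤ 2 → w ∉ Submodule.span K (v '' s)} : ℤ) =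
      (Fintype.card K : ℤ) ^ 3 - 1 - Fintype.card ι * (Fintype.card K - 1)
        - (matchings ι 1).card * (Fintype.card K - 1) ^ 2
        + (matchings ι 2).card * (Fintype.card K - 1)
        - ∑ T ∈ matchings ι 3, (Nat.card (secantMeet K v T) : ℤ) := by
  have := Module.finite_of_finite K (M := V)
  have h₀ : matchings ι 0 = {∅} := by simp [matchings]
  have h₁ : ∀ T ∈ matchings ι 1,
      (Nat.card (secantMeet K v T) : ℤ) = ((Fintype.card K : ℤ) - 1) ^ 2 := by
    intro T hT
    obtain ⟨hT₁, hT₂, -⟩ := mem_matchings.1 hT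
    obtain ⟨s, rfl⟩ := Finset.card_eq_one.1 hT₁
    rw [card_secantMeet_singleton hv (hT₂ s (Finset.mem_singleton_self s)), Nat.cast_pow,
      natCast_card_units]
  have h₂ : ∀ T ∈ matchings ι 2, (Nat.card (secantMeet K v T) : ℤ) = Fintype.card K - 1 := by
    intro T hT
    obtain ⟨hT₁, hT₂, hd⟩ := mem_matchings.1 hT
    obtain ⟨s, t, hst, rfl⟩ := Finset.card_eq_two.1 hT₁
    exact card_secantMeet_pair hV hv (hT₂ s (by simp)) (hT₂ t (by simp))
      (hd (by simp) (by simp) hst)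
  rw [card_off_secants_eq_sum_matchings hv (n := 4) (by omega)]
  simp only [Finset.sum_range_succ, Finset.range_zero, Finset.sum_empty, h₀, Finset.sum_singleton,
    card_secantMeet_empty hv, hV, Finset.sum_congr rfl h₁, Finset.sum_congr rfl h₂,
    Finset.sum_const, nsmul_eq_mul]
  ring

end PlaneArcExtension

section Minors

theorem forall_mem_powersetCard_succ_insert {α : Type*} [DecidableEq α] {x : α} {t : Finset α}
    (hx : x ∉ t) (k : ℕ) {Q : Finset α → Prop} :
    (∀ s ∈ Finset.powersetCard (k + 1) (insert x t), Q s) ↔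
      (∀ s ∈ Finset.powersetCard (k + 1) t, Q s) ∧
        ∀ s ∈ Finset.powersetCard k t, Q (insert x s) := by
  simp only [Finset.powersetCard_succ_insert hx, Finset.mem_union, or_imp, forall_and,
    Finset.forall_mem_image]

variable {ι K : Type*} [Field K]

theorem linearIndepOn_toFinset_iff_det_ne_zero {r : ℕ} [DecidableEq ι] {v : ι → Fin r → K}
    {l : List ι} (hl : l.Nodup) (hr : l.length = r) :
    LinearIndepOn K v (l.toFinset : Finset ι) ↔
      (Matrix.of fun i => v (l.get (i.cast hr.symm))).det ≠ 0 := by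
  subst hr
  rw [← isUnit_iff_ne_zero, ← Matrix.isUnit_iff_isUnit_det,
    ← Matrix.linearIndependent_rows_iff_isUnit]
  have hrange : ((l.toFinset : Finset ι) : Set ι) = Set.range l.get := by
    ext; simp [List.mem_iff_get]
  rw [hrange, linearIndepOn_range_iff hl.injective_get]
  rfl

theorem linearIndepOn_triple_iff_det_ne_zero [DecidableEq ι] {v : ι → Fin 3 → K} {a b c : ι}
    (h : [a, b, c].Nodup) : LinearIndepOn K v ({a, b, c} : Finset ι) ↔
      (Matrix.of ![v a, v b, v c]).det ≠ 0 := by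
  have hrows : (fun i => v ([a, b, c].get i)) = ![v a, v b, v c] := by
    funext i; fin_cases i <;> rfl
  rw [← hrows]
  simpa using linearIndepOn_toFinset_iff_det_ne_zero (v := v) h rfl

theorem linearIndepOn_quadruple_iff_det_ne_zero [DecidableEq ι] {v : ι → Fin 4 → K} {a b c d : ι}
    (h : [a, b, c, d].Nodup) :
    LinearIndepOn K v ({a, b, c, d} : Finset ι) ↔ (Matrix.of ![v a, v b, v c, v d]).det ≠ 0 := by
  have hrows : (fun i => v ([a, b, c, d].get i)) = ![v a, v b, v c, v d] := by
    funext i; fin_cases i <;> rfl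
  rw [← hrows]
  simpa using linearIndepOn_toFinset_iff_det_ne_zero (v := v) h rfl

/-- Laplace expansion along the first two rows. -/
theorem det_fin_four {R : Type*} [CommRing R] (A : Matrix (Fin 4) (Fin 4) R) :
    A.det =
      (A 0 0 * A 1 1 - A 0 1 * A 1 0) * (A 2 2 * A 3 3 - A 2 3 * A 3 2)
        - (A 0 0 * A 1 2 - A 0 2 * A 1 0) * (A 2 1 * A 3 3 - A 2 3 * A 3 1)
        + (A 0 0 * A 1 3 - A 0 3 * A 1 0) * (A 2 1 * A 3 2 - A 2 2 * A 3 1)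
        + (A 0 1 * A 1 2 - A 0 2 * A 1 1) * (A 2 0 * A 3 3 - A 2 3 * A 3 0)
        - (A 0 1 * A 1 3 - A 0 3 * A 1 1) * (A 2 0 * A 3 2 - A 2 2 * A 3 0)
        + (A 0 2 * A 1 3 - A 0 3 * A 1 2) * (A 2 0 * A 3 1 - A 2 1 * A 3 0) := by
  simp [Matrix.det_succ_row_zero, Fin.sum_univ_succ, Fin.succAbove]
  ring

theorem realizes_iff_forall_mem_powersetCard [Fintype ι] {V : Type*} [AddCommGroup V]
    [Module K V] {r : ℕ} {D : Finset ι → Prop} {v : ι → V} :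
    Realizes K r D v ↔
      ∀ s ∈ Finset.powersetCard r Finset.univ, (¬ LinearIndepOn K v s ↔ D s) := by
  simp [Realizes]

end Minors

section Configurations

variable {ι K : Type*} [Field K] {r : ℕ} {D : Finset ι → Prop} {v : ι → Fin r → K}

theorem Realizes.apply_eq_zero_iff [DecidableEq ι] (h : Realizes K r D v) {b : Fin r ↪ ι}
    (hb : ∀ i, v (b i) = Pi.single i 1) {x : ι} (hx : ∀ i, b i ≠ x) (j : Fin r) :
    v x j = 0 ↔ D (insert x ((Finset.univ.erase j).map b)) := by
  have hxs : x ∉ (Finset.univ.erase j).map b := by simp [hx]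
  have himage : v '' (Finset.univ.erase j).map b = Pi.basisFun K (Fin r) '' {j}ᶜ := by
    rw [Finset.coe_map, Set.image_image]
    simp only [hb, Pi.basisFun_apply, Finset.coe_erase, Finset.coe_univ, Set.compl_eq_univ_sdiff]
  have hspan : v x ∈ Submodule.span K (v '' (Finset.univ.erase j).map b) ↔ v x j = 0 := by
    rw [himage, Module.Basis.mem_span_image]
    simp [Set.subset_compl_singleton_iff]
  have hbasis : LinearIndepOn K v ((Finset.univ.erase j).map b) := by
    have hLI : LinearIndependent K (v ∘ b) := by
      simpa only [funext hb, Function.comp_def, ← Pi.basisFun_apply] using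
        (Pi.basisFun K (Fin r)).linearIndependent
    refine ((linearIndepOn_range_iff b.injective v).2 hLI).mono ?_
    simp
  rw [← h _ ?_, Finset.coe_insert, linearIndepOn_insert (by exact_mod_cast hxs), hspan]
  · tauto
  · rw [Finset.card_insert_of_notMem hxs, Finset.card_map, Finset.card_erase_of_mem (by simp),
      Finset.card_univ, Fintype.card_fin, Nat.sub_add_cancel (Fin.pos j)]

theorem Realizes.det_eq_zero_iff [DecidableEq ι] {D : Finset ι → Prop} {v : ι → Fin 4 → K}
    (h : Realizes K 4 D v) {a b c d : ι} (hn : [a, b, c, d].Nodup) :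
    (Matrix.of ![v a, v b, v c, v d]).det = 0 ↔ D {a, b, c, d} := by
  have hcard : ({a, b, c, d} : Finset ι).card = 4 := by
    simpa using List.toFinset_card_of_nodup hn
  rw [← h _ hcard, linearIndepOn_quadruple_iff_det_ne_zero hn, not_ne_iff]

theorem card_realizes_eq_card_linearEquiv_mul_card_normalForm {α : Type*} {b : Fin r ↪ ι}
    (hb : ¬ D (Finset.univ.map b)) {f : α → ι → Fin r → K} (hf : Function.Injective f)
    (hreal : ∀ p, Realizes K r D (f p)) (hbasis : ∀ p i, f p (b i) = Pi.single i 1)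
    (hexists : ∀ v, Realizes K r D v → (∀ i, v (b i) = Pi.single i 1) → ∃ p, f p = v) :
    Nat.card {v : ι → Fin r → K // Realizes K r D v} =
      Nat.card ((Fin r → K) ≃ₗ[K] (Fin r → K)) * Nat.card α := by
  have hrange : ∀ v, (Realizes K r D v ∧ ∀ i, v (b i) = Pi.single i 1) ↔ v ∈ Set.range f := by
    refine fun v => ⟨fun hv => hexists v hv.1 hv.2, ?_⟩
    rintro ⟨p, rfl⟩
    exact ⟨hreal p, hbasis p⟩
  rw [card_realizes_eq_card_linearEquiv_mul b hb, Nat.card_congr (Equiv.subtypeEquivRight hrange)]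
  exact congrArg _ (Nat.card_range_of_injective hf)

end Configurations

section FanoComplement

variable {K : Type*} [Field K]

theorem univ_fin_seven : (Finset.univ : Finset (Fin 7)) =
    insert 0 (insert 1 (insert 2 (insert 3 (insert 4 (insert 5 (insert 6 ∅)))))) := rfl

/-- The coplanarity relation of `h₁` when `E` is false and of `h₂` when `E` is true: the two
hyperfigurations differ only in the plane `{0, 3, 5, 6}`. -/
def IsFanoCoplanar (E : Prop) (s : Finset (Fin 7)) : Prop :=
  s ∈ h1planes ∨ s = {0, 3, 5, 6} ∧ E

/-- The points `6, 1, 2, 4` serve as the standard basis of the realizations of `h₁` and `h₂`. -/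
def fanoBasis : Fin 4 ↪ Fin 7 := ⟨![6, 1, 2, 4], by decide⟩

/-- The realizations of `h₁` or `h₂` in which `fanoBasis` is the standard basis: `p 0`, `p 1`, `p 2`
are scale factors of the points `0, 3, 5`, and the other parameters are their coordinates. -/
def fanoForm (p : Fin 6 → Kˣ) : Fin 7 → Fin 4 → K :=
  (![p 0, 1, 1, p 1, 1, p 2, 1] : Fin 7 → Kˣ) • ![![1, 0, (p 4 : K), (p 5 : K)],
    Pi.single 1 1, Pi.single 2 1, ![1, (p 3 : K), 0, (p 5 : K)],
    Pi.single 3 1, ![1, (p 3 : K), (p 4 : K), 0], Pi.single 0 1]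

theorem fanoForm_injective : Function.Injective (fanoForm (K := K)) := by
  intro p p' h
  obtain ⟨h0, h04, h05⟩ : (p 0 : K) = p' 0 ∧ (p 0 : K) * p 4 = p' 0 * p' 4 ∧
      (p 0 : K) * p 5 = p' 0 * p' 5 := by simpa [fanoForm, Units.smul_def] using congrFun h 0
  obtain ⟨h1, h13, -⟩ : (p 1 : K) = p' 1 ∧ (p 1 : K) * p 3 = p' 1 * p' 3 ∧
      (p 1 : K) * p 5 = p' 1 * p' 5 := by simpa [fanoForm, Units.smul_def] using congrFun h 3
  obtain ⟨h2, -⟩ : (p 2 : K) = p' 2 ∧ (p 2 : K) * p 3 = p' 2 * p' 3 ∧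
      (p 2 : K) * p 4 = p' 2 * p' 4 := by simpa [fanoForm, Units.smul_def] using congrFun h 5
  ext i
  fin_cases i <;> simp_all

theorem realizes_fanoForm_iff {E : Prop} (p : Fin 6 → Kˣ) :
    Realizes K 4 (IsFanoCoplanar E) (fanoForm p) ↔ ((2 : K) = 0 ↔ E) := by
  have hdet : -((p 5 : K) * p 3 * p 4) + -(p 4 * p 5 * p 3) = 0 ↔ (2 : K) = 0 := by
    rw [show -((p 5 : K) * p 3 * p 4) + -(p 4 * p 5 * p 3) = -(2 * (p 3 * p 4 * p 5)) by ring]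
    simp
  rw [fanoForm, realizes_units_smul_iff, realizes_iff_forall_mem_powersetCard, univ_fin_seven]
  simp +decide only [forall_mem_powersetCard_succ_insert, Finset.mem_insert, Finset.notMem_empty,
    Finset.powersetCard_zero, Finset.mem_singleton, forall_eq, IsFanoCoplanar, true_and, false_and,
    or_false, false_or]
  simp (disch := decide) only [insert_empty_eq, linearIndepOn_quadruple_iff_det_ne_zero, not_not]
  simp [det_fin_four, hdet]

theorem exists_fanoForm_eq {E : Prop} {v : Fin 7 → Fin 4 → K}
    (h : Realizes K 4 (IsFanoCoplanar E) v) (hb : ∀ i, v (fanoBasis i) = Pi.single i 1) :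
    ∃ p, fanoForm p = v := by
  have hv0 : ∀ j, v 0 j = 0 ↔ j = 1 := fun j => by
    rw [h.apply_eq_zero_iff hb (by decide) j]; fin_cases j <;> simp +decide [IsFanoCoplanar]
  have hv3 : ∀ j, v 3 j = 0 ↔ j = 2 := fun j => by
    rw [h.apply_eq_zero_iff hb (by decide) j]; fin_cases j <;> simp +decide [IsFanoCoplanar]
  have hv5 : ∀ j, v 5 j = 0 ↔ j = 3 := fun j => by
    rw [h.apply_eq_zero_iff hb (by decide) j]; fin_cases j <;> simp +decide [IsFanoCoplanar]
  have hv6 : v 6 = Pi.single 0 1 := hb 0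
  have hv1 : v 1 = Pi.single 1 1 := hb 1
  have hv2 : v 2 = Pi.single 2 1 := hb 2
  have hv4 : v 4 = Pi.single 3 1 := hb 3
  have h03 : v 0 0 * v 3 3 - v 0 3 * v 3 0 = 0 := by
    simpa [det_fin_four, hv1, hv2] using
      (h.det_eq_zero_iff (a := 1) (b := 2) (c := 0) (d := 3) (by decide)).2 (.inl (by decide))
  have h05 : v 0 2 * v 5 0 - v 0 0 * v 5 2 = 0 := by
    simpa [det_fin_four, hv1, hv4] using
      (h.det_eq_zero_iff (a := 1) (b := 4) (c := 0) (d := 5) (by decide)).2 (.inl (by decide))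
  have h35 : v 3 0 * v 5 1 - v 3 1 * v 5 0 = 0 := by
    simpa [det_fin_four, hv2, hv4] using
      (h.det_eq_zero_iff (a := 2) (b := 4) (c := 3) (d := 5) (by decide)).2 (.inl (by decide))
  have h00 : v 0 0 ≠ 0 := by simp [hv0]
  have h30 : v 3 0 ≠ 0 := by simp [hv3]
  refine ⟨![.mk0 (v 0 0) h00, .mk0 (v 3 0) h30, .mk0 (v 5 0) (by simp [hv5]),
    .mk0 (v 3 1 / v 3 0) (by simp [hv3]), .mk0 (v 0 2 / v 0 0) (by simp [hv0]),
    .mk0 (v 0 3 / v 0 0) (by simp [hv0])], ?_⟩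
  ext i j
  fin_cases i <;> fin_cases j <;>
    simp [fanoForm, hv1, hv2, hv4, hv6, Units.smul_def, (hv0 _).2, (hv3 _).2, (hv5 _).2] <;>
    field_simp
  · linear_combination -h03
  · linear_combination -h35
  · linear_combination h05

open Classical in
theorem card_realizes_isFanoCoplanar (E : Prop) :
    Nat.card {v : Fin 7 → Fin 4 → K // Realizes K 4 (IsFanoCoplanar E) v} =
      if (2 : K) = 0 ↔ E then
        Nat.card ((Fin 4 → K) ≃ₗ[K] (Fin 4 → K)) * Nat.card Kˣ ^ 6 else 0 := by
  rw [card_realizes_eq_card_linearEquiv_mul_card_normalForm (b := fanoBasis)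
    (α := {_p : Fin 6 → Kˣ // (2 : K) = 0 ↔ E}) (f := fun p => fanoForm p.1)
    (by simp +decide [IsFanoCoplanar]) (fanoForm_injective.comp Subtype.val_injective)
    (fun p => (realizes_fanoForm_iff p.1).2 p.2)]
  · split_ifs with hE <;> simp [hE, Nat.card_fun]
  · intro p i
    fin_cases i <;> simp [fanoForm, fanoBasis]
  · intro v hv hb
    obtain ⟨p, rfl⟩ := exists_fanoForm_eq hv hb
    exact ⟨⟨p, (realizes_fanoForm_iff p).1 hv⟩, rfl⟩

end FanoComplement

section CollinearTriple

variable {K : Type*} [Field K]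

/-- The coplanarity relation whose maximal coplanar sets are the members of `planes`. -/
abbrev IsCoplanarIn (planes : Finset (Finset (Fin 7))) (s : Finset (Fin 7)) : Prop :=
  ∃ t ∈ planes, s ⊆ t

/-- The points `3, 4, 5, 6` serve as the standard basis of the realizations of `h₃`. -/
def h3Basis : Fin 4 ↪ Fin 7 := ⟨![3, 4, 5, 6], by decide⟩

/-- The realizations of `h₃` in which `h3Basis` is the standard basis. The points `0, 1, 2` lie on
a line, and the parameter `t` locates `2` on it. -/
def h3Form (p : (Fin 6 → Kˣ) × {t : K // t ≠ 0 ∧ t ≠ 1}) : Fin 7 → Fin 4 → K :=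
  (![p.1 0, p.1 1, p.1 2, 1, 1, 1, 1] : Fin 7 → Kˣ) • ![![1, (p.1 3 : K), (p.1 4 : K), 0],
    ![1, p.2 * p.1 3, 0, (p.1 5 : K)], ![p.2 - 1, 0, p.2 * p.1 4, -(p.1 5 : K)],
    Pi.single 0 1, Pi.single 1 1, Pi.single 2 1, Pi.single 3 1]

theorem h3Form_injective : Function.Injective (h3Form (K := K)) := by
  rintro ⟨p, t, ht⟩ ⟨p', t', ht'⟩ h
  obtain ⟨h0, h03, h04⟩ : (p 0 : K) = p' 0 ∧ (p 0 : K) * p 3 = p' 0 * p' 3 ∧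
      (p 0 : K) * p 4 = p' 0 * p' 4 := by simpa [h3Form, Units.smul_def] using congrFun h 0
  obtain ⟨h1, h13, h15⟩ : (p 1 : K) = p' 1 ∧ (p 1 : K) * (t * p 3) = p' 1 * (t' * p' 3) ∧
      (p 1 : K) * p 5 = p' 1 * p' 5 := by simpa [h3Form, Units.smul_def] using congrFun h 1
  obtain ⟨-, -, h25⟩ : (p 2 : K) * (t - 1) = p' 2 * (t' - 1) ∧
      (p 2 : K) * (t * p 4) = p' 2 * (t' * p' 4) ∧ (p 2 : K) * p 5 = p' 2 * p' 5 := by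
    simpa [h3Form, Units.smul_def] using congrFun h 2
  have hp : p = p' := by
    ext i
    fin_cases i <;> simp_all
  simp_all

theorem realizes_h3Form (p : (Fin 6 → Kˣ) × {t : K // t ≠ 0 ∧ t ≠ 1}) :
    Realizes K 4 (IsCoplanarIn h3planes) (h3Form p) := by
  obtain ⟨p, t, ht₀, ht₁⟩ := p
  have ht₁' : t - 1 ≠ 0 := sub_ne_zero.2 ht₁
  rw [h3Form, realizes_units_smul_iff, realizes_iff_forall_mem_powersetCard, univ_fin_seven]
  simp +decide only [forall_mem_powersetCard_succ_insert, Finset.mem_insert, Finset.notMem_empty,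
    Finset.powersetCard_zero, Finset.mem_singleton, forall_eq, IsCoplanarIn]
  simp (disch := decide) only [insert_empty_eq, linearIndepOn_quadruple_iff_det_ne_zero, not_not]
  simp only [det_fin_four]
  simp [ht₀, ht₁', show -(p 5 : K) - p 5 * (t - 1) = -(t * p 5) by ring,
    show p 4 * (t - 1) - t * p 4 = -(p 4 : K) by ring,
    show t * p 3 - p 3 = (t - 1) * (p 3 : K) by ring]
  grind

theorem exists_h3Form_eq {v : Fin 7 → Fin 4 → K} (h : Realizes K 4 (IsCoplanarIn h3planes) v)
    (hb : ∀ i, v (h3Basis i) = Pi.single i 1) : ∃ p, h3Form p = v := by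
  have hv0 : ∀ j, v 0 j = 0 ↔ j = 3 := fun j => by
    rw [h.apply_eq_zero_iff hb (by decide) j]; fin_cases j <;> simp +decide
  have hv1 : ∀ j, v 1 j = 0 ↔ j = 2 := fun j => by
    rw [h.apply_eq_zero_iff hb (by decide) j]; fin_cases j <;> simp +decide
  have hv2 : ∀ j, v 2 j = 0 ↔ j = 1 := fun j => by
    rw [h.apply_eq_zero_iff hb (by decide) j]; fin_cases j <;> simp +decide
  have hv3 : v 3 = Pi.single 0 1 := hb 0
  have hv4 : v 4 = Pi.single 1 1 := hb 1
  have hv5 : v 5 = Pi.single 2 1 := hb 2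
  have hv6 : v 6 = Pi.single 3 1 := hb 3
  have h0123 : v 0 1 * v 1 3 * v 2 2 + v 0 2 * v 1 1 * v 2 3 = 0 := by
    have := (h.det_eq_zero_iff (a := 0) (b := 1) (c := 2) (d := 3) (by decide)).2 (by decide)
    simp [det_fin_four, hv3, (hv0 _).2, (hv1 _).2, (hv2 _).2] at this
    linear_combination this
  have h0125 : v 0 0 * v 1 1 * v 2 3 - v 0 1 * (v 1 0 * v 2 3 - v 1 3 * v 2 0) = 0 := by
    have := (h.det_eq_zero_iff (a := 0) (b := 1) (c := 2) (d := 5) (by decide)).2 (by decide)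
    simp [det_fin_four, hv5, (hv0 _).2, (hv1 _).2, (hv2 _).2] at this
    linear_combination -this
  have h00 : v 0 0 ≠ 0 := by simp [hv0]
  have h01 : v 0 1 ≠ 0 := by simp [hv0]
  have h10 : v 1 0 ≠ 0 := by simp [hv1]
  have h13 : v 1 3 ≠ 0 := by simp [hv1]
  have h20 : v 2 0 ≠ 0 := by simp [hv2]
  have ht : v 1 1 * v 0 0 / (v 1 0 * v 0 1) ≠ 1 := fun ht => by
    rw [div_eq_one_iff_eq (mul_ne_zero h10 h01)] at ht
    refine mul_ne_zero (mul_ne_zero h01 h13) h20 ?_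
    linear_combination h0125 - v 2 3 * ht
  refine ⟨⟨![.mk0 (v 0 0) h00, .mk0 (v 1 0) h10, .mk0 (-(v 2 3 * v 1 0 / v 1 3)) (by simp [*]),
    .mk0 (v 0 1 / v 0 0) (by simp [*]), .mk0 (v 0 2 / v 0 0) (by simp [*]),
    .mk0 (v 1 3 / v 1 0) (by simp [*])], v 1 1 * v 0 0 / (v 1 0 * v 0 1), by simp [*], ht⟩, ?_⟩
  ext i j
  fin_cases i <;> fin_cases j <;>
    simp [h3Form, hv3, hv4, hv5, hv6, Units.smul_def, (hv0 _).2, (hv1 _).2, (hv2 _).2] <;>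
    field_simp
  · linear_combination -h0125
  · linear_combination -h0123

end CollinearTriple

section TwoLines

variable {K : Type*} [Field K]

/-- The points `0, 1, 4, 5` serve as the standard basis of the realizations of `h₅`. -/
def h5Basis : Fin 4 ↪ Fin 7 := ⟨![0, 1, 4, 5], by decide⟩

/-- The realizations of `h₅` in which `h5Basis` is the standard basis; `t` is the cross-ratio of
the points `0, 1, 2, 3`. -/
def h5Form (p : (Fin 5 → Kˣ) × {t : K // t ≠ 0 ∧ t ≠ 1}) : Fin 7 → Fin 4 → K :=
  (![1, 1, p.1 0, p.1 1, 1, 1, p.1 2] : Fin 7 → Kˣ) • ![Pi.single 0 1, Pi.single 1 1,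
    ![1, (p.1 3 : K), 0, 0], ![1, p.2 * p.1 3, 0, 0], Pi.single 2 1, Pi.single 3 1,
    ![0, 0, 1, (p.1 4 : K)]]

theorem h5Form_injective : Function.Injective (h5Form (K := K)) := by
  rintro ⟨p, t, ht⟩ ⟨p', t', ht'⟩ h
  obtain ⟨h0, h03⟩ : (p 0 : K) = p' 0 ∧ (p 0 : K) * p 3 = p' 0 * p' 3 := by
    simpa [h5Form, Units.smul_def] using congrFun h 2
  obtain ⟨h1, h13⟩ : (p 1 : K) = p' 1 ∧ (p 1 : K) * (t * p 3) = p' 1 * (t' * p' 3) := by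
    simpa [h5Form, Units.smul_def] using congrFun h 3
  obtain ⟨h2, h24⟩ : (p 2 : K) = p' 2 ∧ (p 2 : K) * p 4 = p' 2 * p' 4 := by
    simpa [h5Form, Units.smul_def] using congrFun h 6
  have hp : p = p' := by
    ext i
    fin_cases i <;> simp_all
  simp_all

theorem realizes_h5Form (p : (Fin 5 → Kˣ) × {t : K // t ≠ 0 ∧ t ≠ 1}) :
    Realizes K 4 (IsCoplanarIn h5planes) (h5Form p) := by
  obtain ⟨p, t, ht₀, ht₁⟩ := p
  have hdet : t * p 3 ≠ p 3 := by simpa using ht₁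
  rw [h5Form, realizes_units_smul_iff, realizes_iff_forall_mem_powersetCard, univ_fin_seven]
  simp +decide only [forall_mem_powersetCard_succ_insert, Finset.mem_insert, Finset.notMem_empty,
    Finset.powersetCard_zero, Finset.mem_singleton, forall_eq]
  simp (disch := decide) only [insert_empty_eq, linearIndepOn_quadruple_iff_det_ne_zero, not_not]
  simp [det_fin_four, sub_eq_zero, ht₀, hdet, hdet.symm]

theorem exists_h5Form_eq {v : Fin 7 → Fin 4 → K} (h : Realizes K 4 (IsCoplanarIn h5planes) v)
    (hb : ∀ i, v (h5Basis i) = Pi.single i 1) : ∃ p, h5Form p = v := by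
  have hv2 : ∀ j, v 2 j = 0 ↔ j = 2 ∨ j = 3 := fun j => by
    rw [h.apply_eq_zero_iff hb (by decide) j]; fin_cases j <;> simp +decide
  have hv3 : ∀ j, v 3 j = 0 ↔ j = 2 ∨ j = 3 := fun j => by
    rw [h.apply_eq_zero_iff hb (by decide) j]; fin_cases j <;> simp +decide
  have hv6 : ∀ j, v 6 j = 0 ↔ j = 0 ∨ j = 1 := fun j => by
    rw [h.apply_eq_zero_iff hb (by decide) j]; fin_cases j <;> simp +decide
  have hv0 : v 0 = Pi.single 0 1 := hb 0
  have hv1 : v 1 = Pi.single 1 1 := hb 1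
  have hv4 : v 4 = Pi.single 2 1 := hb 2
  have hv5 : v 5 = Pi.single 3 1 := hb 3
  have h20 : v 2 0 ≠ 0 := by simp [hv2]
  have h21 : v 2 1 ≠ 0 := by simp [hv2]
  have h30 : v 3 0 ≠ 0 := by simp [hv3]
  have h31 : v 3 1 ≠ 0 := by simp [hv3]
  have h60 : v 6 2 ≠ 0 := by simp [hv6]
  have h63 : v 6 3 ≠ 0 := by simp [hv6]
  have ht : v 3 1 * v 2 0 / (v 3 0 * v 2 1) ≠ 1 := fun ht => by
    have hdet := (h.det_eq_zero_iff (a := 2) (b := 3) (c := 4) (d := 5) (by decide)).not.2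
      (by decide)
    rw [div_eq_one_iff_eq (mul_ne_zero h30 h21)] at ht
    have hminor : v 2 0 * v 3 1 - v 2 1 * v 3 0 ≠ 0 := by simpa [det_fin_four, hv4, hv5] using hdet
    exact hminor (by linear_combination ht)
  refine ⟨⟨![.mk0 _ h20, .mk0 _ h30, .mk0 _ h60, .mk0 (v 2 1 / v 2 0) (by simp [*]),
    .mk0 (v 6 3 / v 6 2) (by simp [*])], v 3 1 * v 2 0 / (v 3 0 * v 2 1), by simp [*], ht⟩, ?_⟩
  ext i j
  fin_cases i <;> fin_cases j <;>
    simp [h5Form, hv0, hv1, hv4, hv5, Units.smul_def, (hv2 _).2, (hv3 _).2, (hv6 _).2] <;>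
    field_simp

/-- The coplanarity relation of the hyperfiguration on six points. -/
abbrev IsHyp6Coplanar (s : Finset (Fin 6)) : Prop :=
  s ∈ ({{0, 1, 2, 3}, {0, 1, 2, 4}, {0, 1, 2, 5}, {0, 3, 4, 5}, {1, 3, 4, 5}, {2, 3, 4, 5}} :
    Finset (Finset (Fin 6)))

/-- The points `0, 1, 3, 4` serve as the standard basis of the realizations of the hyperfiguration
on six points. -/
def hyp6Basis : Fin 4 ↪ Fin 6 := ⟨![0, 1, 3, 4], by decide⟩

/-- The realizations of the hyperfiguration on six points in which `hyp6Basis` is the standard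
basis. -/
def hyp6Form (p : Fin 4 → Kˣ) : Fin 6 → Fin 4 → K :=
  ![Pi.single 0 1, Pi.single 1 1, ![(p 0 : K), (p 1 : K), 0, 0],
    Pi.single 2 1, Pi.single 3 1, ![0, 0, (p 2 : K), (p 3 : K)]]

theorem hyp6Form_injective : Function.Injective (hyp6Form (K := K)) := by
  intro p p' h
  have h2 : (p 0 : K) = p' 0 ∧ (p 1 : K) = p' 1 := by simpa [hyp6Form] using congrFun h 2
  have h5 : (p 2 : K) = p' 2 ∧ (p 3 : K) = p' 3 := by simpa [hyp6Form] using congrFun h 5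
  ext i
  fin_cases i <;> simp [h2, h5]

theorem realizes_hyp6Form (p : Fin 4 → Kˣ) : Realizes K 4 IsHyp6Coplanar (hyp6Form p) := by
  rw [hyp6Form, realizes_iff_forall_mem_powersetCard, show (Finset.univ : Finset (Fin 6)) =
    insert 0 (insert 1 (insert 2 (insert 3 (insert 4 (insert 5 ∅))))) from rfl]
  simp +decide only [forall_mem_powersetCard_succ_insert, Finset.mem_insert, Finset.notMem_empty,
    Finset.powersetCard_zero, Finset.mem_singleton, forall_eq]
  simp (disch := decide) only [insert_empty_eq, linearIndepOn_quadruple_iff_det_ne_zero, not_not]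
  simp [det_fin_four]

theorem exists_hyp6Form_eq {v : Fin 6 → Fin 4 → K} (h : Realizes K 4 IsHyp6Coplanar v)
    (hb : ∀ i, v (hyp6Basis i) = Pi.single i 1) : ∃ p, hyp6Form p = v := by
  have hv2 : ∀ j, v 2 j = 0 ↔ j = 2 ∨ j = 3 := fun j => by
    rw [h.apply_eq_zero_iff hb (by decide) j]; fin_cases j <;> simp +decide
  have hv5 : ∀ j, v 5 j = 0 ↔ j = 0 ∨ j = 1 := fun j => by
    rw [h.apply_eq_zero_iff hb (by decide) j]; fin_cases j <;> simp +decide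
  have hv0 : v 0 = Pi.single 0 1 := hb 0
  have hv1 : v 1 = Pi.single 1 1 := hb 1
  have hv3 : v 3 = Pi.single 2 1 := hb 2
  have hv4 : v 4 = Pi.single 3 1 := hb 3
  refine ⟨![.mk0 (v 2 0) (by simp [hv2]), .mk0 (v 2 1) (by simp [hv2]),
    .mk0 (v 5 2) (by simp [hv5]), .mk0 (v 5 3) (by simp [hv5])], ?_⟩
  ext i j
  fin_cases i <;> fin_cases j <;>
    simp [hyp6Form, hv0, hv1, hv3, hv4, (hv2 _).2, (hv5 _).2]

end TwoLines

section ConfigurationCounts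

variable (K : Type*) [Field K]

theorem card_ne_zero_and_ne_one [Fintype K] :
    (Nat.card {t : K // t ≠ 0 ∧ t ≠ 1} : ℤ) = Fintype.card K - 2 := by
  classical
  have hfilter : ({t | t ≠ 0 ∧ t ≠ 1} : Finset K) = {0, 1}ᶜ := by
    ext t
    simp
  rw [Nat.card_eq_fintype_card, Fintype.card_subtype, hfilter, Finset.card_compl,
    Finset.card_pair zero_ne_one, Nat.cast_sub Fintype.one_lt_card]
  rfl

theorem card_realizes_h3planes :
    Nat.card {v : Fin 7 → Fin 4 → K // Realizes K 4 (IsCoplanarIn h3planes) v} =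
      Nat.card ((Fin 4 → K) ≃ₗ[K] (Fin 4 → K)) *
        (Nat.card Kˣ ^ 6 * Nat.card {t : K // t ≠ 0 ∧ t ≠ 1}) := by
  rw [card_realizes_eq_card_linearEquiv_mul_card_normalForm (b := h3Basis) (by decide)
    h3Form_injective realizes_h3Form (fun p i => ?_) (fun v => exists_h3Form_eq)]
  · simp [Nat.card_prod, Nat.card_fun]
  · fin_cases i <;> simp [h3Form, h3Basis]

theorem card_realizes_h5planes :
    Nat.card {v : Fin 7 → Fin 4 → K // Realizes K 4 (IsCoplanarIn h5planes) v} =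
      Nat.card ((Fin 4 → K) ≃ₗ[K] (Fin 4 → K)) *
        (Nat.card Kˣ ^ 5 * Nat.card {t : K // t ≠ 0 ∧ t ≠ 1}) := by
  rw [card_realizes_eq_card_linearEquiv_mul_card_normalForm (b := h5Basis) (by decide)
    h5Form_injective realizes_h5Form (fun p i => ?_) (fun v => exists_h5Form_eq)]
  · simp [Nat.card_prod, Nat.card_fun]
  · fin_cases i <;> simp [h5Form, h5Basis]

theorem card_realizes_isHyp6Coplanar :
    Nat.card {v : Fin 6 → Fin 4 → K // Realizes K 4 IsHyp6Coplanar v} =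
      Nat.card ((Fin 4 → K) ≃ₗ[K] (Fin 4 → K)) * Nat.card Kˣ ^ 4 := by
  rw [card_realizes_eq_card_linearEquiv_mul_card_normalForm (b := hyp6Basis) (by decide)
    hyp6Form_injective realizes_hyp6Form (fun p i => ?_) (fun v => exists_hyp6Form_eq)]
  · simp [Nat.card_fun]
  · fin_cases i <;> simp [hyp6Form, hyp6Basis]

end ConfigurationCounts

section PlaneArcCounts

variable {K V : Type*} [Field K] [Fintype K] [AddCommGroup V] [Module K V] [FiniteDimensional K V]

theorem card_isArc_three_option {ι : Type*} [Fintype ι] [DecidableEq ι]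
    (hV : Module.finrank K V = 3) (hι : Fintype.card ι < 8) :
    (Nat.card {v : Option ι → V // IsArc K 3 v} : ℤ) =
      Nat.card {v : ι → V // IsArc K 3 v} *
          ((Fintype.card K : ℤ) ^ 3 - 1 - Fintype.card ι * (Fintype.card K - 1)
            - (matchings ι 1).card * (Fintype.card K - 1) ^ 2
            + (matchings ι 2).card * (Fintype.card K - 1))
        - ∑ T ∈ matchings ι 3,
            (Nat.card {p : (ι → V) × V // IsArc K 3 p.1 ∧ p.2 ∈ secantMeet K p.1 T} : ℤ) := by
  classical
  have := Module.finite_of_finite K (M := V)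
  have := Fintype.ofFinite {v : ι → V // IsArc K 3 v}
  have hmeet (T : Finset (Finset ι)) :
      Nat.card {p : (ι → V) × V // IsArc K 3 p.1 ∧ p.2 ∈ secantMeet K p.1 T} =
        ∑ v : {v : ι → V // IsArc K 3 v}, Nat.card (secantMeet K v.1 T) := by
    rw [← Nat.card_sigma]
    exact Nat.card_congr
      { toFun p := ⟨⟨p.1.1, p.2.1⟩, p.1.2, p.2.2⟩
        invFun p := ⟨(p.1.1, p.2.1), p.1.2, p.2.2⟩
        left_inv _ := rfl
        right_inv _ := rfl }
  rw [card_isArc_option, Nat.cast_sum,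
    Finset.sum_congr rfl fun v _ => card_off_secants hV v.2 hι, Finset.sum_sub_distrib,
    Finset.sum_const, nsmul_eq_mul, Finset.card_univ, Nat.card_eq_fintype_card, Finset.sum_comm]
  simp only [hmeet, Nat.cast_sum]

theorem card_isArc_three_fin_succ (hV : Module.finrank K V = 3) {k : ℕ} (hk : k < 8) :
    (Nat.card {v : Fin (k + 1) → V // IsArc K 3 v} : ℤ) =
      Nat.card {v : Fin k → V // IsArc K 3 v} *
          ((Fintype.card K : ℤ) ^ 3 - 1 - k * (Fintype.card K - 1)
            - (matchings (Fin k) 1).card * (Fintype.card K - 1) ^ 2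
            + (matchings (Fin k) 2).card * (Fintype.card K - 1))
        - ∑ T ∈ matchings (Fin k) 3,
            (Nat.card {p : (Fin k → V) × V // IsArc K 3 p.1 ∧ p.2 ∈ secantMeet K p.1 T} : ℤ) := by
  rw [card_isArc_congr (finSuccEquiv k), card_isArc_three_option hV (by simpa using hk),
    Fintype.card_fin]

theorem matchings_eq_empty {ι : Type*} [Fintype ι] [DecidableEq ι] {j : ℕ}
    (hj : Fintype.card ι < 2 * j) : matchings ι j = ∅ := by
  refine Finset.eq_empty_of_forall_notMem fun T hT => ?_
  obtain ⟨rfl, hT, hd⟩ := mem_matchings.1 hT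
  exact hj.not_ge (two_mul_card_le_of_pairwiseDisjoint hT hd)

theorem card_matchings_fin_one_and_two {k : ℕ} (hk : k < 7) :
    (matchings (Fin k) 1).card = k.choose 2 ∧ (matchings (Fin k) 2).card = 3 * k.choose 4 := by
  interval_cases k <;> decide +kernel

theorem card_isArc_three_fin_six (hV : Module.finrank K V = 3) :
    (Nat.card {v : Fin 6 → V // IsArc K 3 v} : ℤ) =
      ((Fintype.card K : ℤ) - 1) ^ 8 * Fintype.card K ^ 3 * (Fintype.card K + 1) *
        ((Fintype.card K : ℤ) ^ 2 + Fintype.card K + 1) * (Fintype.card K - 2) *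
        (Fintype.card K - 3) * ((Fintype.card K : ℤ) ^ 2 - 9 * Fintype.card K + 21) := by
  have hzero : Nat.card {v : Fin 0 → V // IsArc K 3 v} = 1 := by
    have : Unique {v : Fin 0 → V // IsArc K 3 v} :=
      ⟨⟨⟨Fin.elim0, fun s _ => by simp [Subsingleton.elim s ∅]⟩⟩, fun v => Subsingleton.elim _ _⟩
    exact Nat.card_unique
  have hsucc {k : ℕ} (hk : k < 6) :=
    card_isArc_three_fin_succ (K := K) (V := V) hV (k := k) (by omega)
  have hpairs {k : ℕ} (hk : k < 6) := card_matchings_fin_one_and_two (k := k) (by omega)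
  have htriples {k : ℕ} (hk : k < 6) : matchings (Fin k) 3 = ∅ :=
    matchings_eq_empty (by simpa using hk)
  simp only [hsucc, hpairs, htriples, Finset.sum_empty, hzero, Nat.reduceLT,
    Nat.choose_eq_zero_of_lt]
  norm_num [Nat.choose]
  ring

theorem card_matchings_fin_six_three : (matchings (Fin 6) 3).card = 15 := by
  decide +kernel

end PlaneArcCounts

section ConcurrentSecants

theorem exists_equiv_of_mem_matchings {ι : Type*} [Fintype ι] [DecidableEq ι] {j : ℕ}
    {T : Finset (Finset ι)} (hT : T ∈ matchings ι j) (hι : Fintype.card ι = 2 * j) :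
    ∃ e : Fin j ⊕ Fin j ≃ ι, T = Finset.univ.image fun i => {e (.inl i), e (.inr i)} := by
  obtain ⟨hj, hpair, hd⟩ := mem_matchings.1 hT
  let t : Fin j ≃ T := (Fintype.equivFinOfCardEq (by simpa using hj)).symm
  choose a b hab ht using fun i => Finset.card_eq_two.1 (hpair _ (t i).2)
  have hdisj {i i' : Fin j} (h : i ≠ i') : Disjoint (t i).1 (t i').1 :=
    hd (t i).2 (t i').2 fun h' => h (t.injective (Subtype.ext h'))
  have hab' (i i' : Fin j) : a i ≠ b i' := by
    obtain rfl | h := eq_or_ne i i'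
    · exact hab i
    · exact Finset.disjoint_iff_ne.1 (hdisj h) _ (by simp [ht]) _ (by simp [ht])
  have hinj : Function.Injective (Sum.elim a b) := by
    refine Function.Injective.sumElim (fun i i' h => ?_) (fun i i' h => ?_) hab' <;>
    · by_contra hne
      exact Finset.disjoint_iff_ne.1 (hdisj hne) _ (by simp [ht]) _ (by simp [ht]) h
  have hbij : Function.Bijective (Sum.elim a b) := by
    rw [Fintype.bijective_iff_injective_and_card]
    exact ⟨hinj, by simp [hι, two_mul]⟩
  refine ⟨.ofBijective _ hbij, ?_⟩
  ext s
  simp only [Equiv.ofBijective_apply, Sum.elim_inl, Sum.elim_inr, ← ht, Finset.mem_image,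
    Finset.mem_univ, true_and]
  exact ⟨fun hs => ⟨t.symm ⟨s, hs⟩, by simp⟩, fun ⟨i, hi⟩ => hi ▸ (t i).2⟩

variable {n ι K V : Type*} [Field K] [AddCommGroup V] [Module K V]

/-- The pairs `u (inl i)`, `u (inr i)` all have the same sum. The sum then represents a common point
of the lines joining these pairs. -/
def HasCommonSum (u : n ⊕ n → V) : Prop :=
  ∃ w, ∀ i, u (.inl i) + u (.inr i) = w

theorem IsArc.eq_of_units_smul_pair_sums_eq {v : n ⊕ n → V} (hv : IsArc K 3 v) {c c' : n ⊕ n → Kˣ}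
    (h : ∀ i, (c • v) (.inl i) + (c • v) (.inr i) = (c' • v) (.inl i) + (c' • v) (.inr i)) :
    c = c' := by
  have hi (i : n) := hv.smul_add_smul_inj (r := 1) (Sum.inl_ne_inr (a := i) (b := i)) (h i)
  funext k
  rcases k with i | i
  exacts [Units.ext (hi i).1, Units.ext (hi i).2]

variable [Fintype n] [DecidableEq ι]

theorem mem_secantMeet_image_pair_iff [Nonempty n] {v : ι → V} (hv : IsArc K 3 v) (e : n ⊕ n ≃ ι)
    {w : V} :
    w ∈ secantMeet K v (Finset.univ.image fun i => {e (.inl i), e (.inr i)}) ↔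
      ∃ c : n ⊕ n → Kˣ, ∀ i, c (.inl i) • v (e (.inl i)) + c (.inr i) • v (e (.inr i)) = w := by
  constructor
  · intro hw
    choose a b hab using fun i => exists_units_of_mem_secantMeet hw
      (Finset.mem_image_of_mem (fun i => {e (.inl i), e (.inr i)}) (Finset.mem_univ i))
    exact ⟨Sum.elim a b, hab⟩
  · rintro ⟨c, hc⟩
    refine ⟨?_, fun s hs => ?_⟩
    · rw [← hc (Classical.arbitrary n)]
      exact hv.units_smul_add_units_smul_mem_offPoints (by simp) _ _
    · obtain ⟨i, -, rfl⟩ := Finset.mem_image.1 hs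
      rw [← hc i, Finset.coe_pair, Set.image_pair]
      exact Submodule.mem_span_pair.2 ⟨_, _, rfl⟩

/-- The common point determines the factors by which the points of the arc must be rescaled for the
pairs to have it as their common sum. -/
theorem card_secantMeet_image_pair [Nonempty n] (e : n ⊕ n ≃ ι) :
    Nat.card {p : (ι → V) × V // IsArc K 3 p.1 ∧
        p.2 ∈ secantMeet K p.1 (Finset.univ.image fun i => {e (.inl i), e (.inr i)})} =
      Nat.card Kˣ ^ (2 * Fintype.card n) *
        Nat.card {u : n ⊕ n → V // IsArc K 3 u ∧ HasCommonSum u} := by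
  have hmem (p : (n ⊕ n → Kˣ) × {u : n ⊕ n → V // IsArc K 3 u ∧ HasCommonSum u}) :
      IsArc K 3 ((p.1⁻¹ • p.2.1) ∘ e.symm) ∧ p.2.2.2.choose ∈ secantMeet K
        ((p.1⁻¹ • p.2.1) ∘ e.symm) (Finset.univ.image fun i => {e (.inl i), e (.inr i)}) := by
    have harc := (isArc_comp_equiv_iff e.symm).2 ((isArc_units_smul_iff p.1⁻¹).2 p.2.2.1)
    refine ⟨harc, (mem_secantMeet_image_pair_iff harc e).2 ⟨p.1, fun i => ?_⟩⟩
    simpa using p.2.2.2.choose_spec i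
  let f (p : (n ⊕ n → Kˣ) × {u : n ⊕ n → V // IsArc K 3 u ∧ HasCommonSum u}) :
      {p : (ι → V) × V // IsArc K 3 p.1 ∧
        p.2 ∈ secantMeet K p.1 (Finset.univ.image fun i => {e (.inl i), e (.inr i)})} :=
    ⟨⟨(p.1⁻¹ • p.2.1) ∘ e.symm, p.2.2.2.choose⟩, hmem p⟩
  have hf : Function.Bijective f := by
    constructor
    · rintro ⟨c, u, hu, hsum⟩ ⟨c', u', hu', hsum'⟩ h
      obtain ⟨h₁, h₂⟩ : (c⁻¹ • u) ∘ e.symm = (c'⁻¹ • u') ∘ e.symm ∧ hsum.choose = hsum'.choose := by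
        simpa [f] using h
      have hv : c⁻¹ • u = c'⁻¹ • u' := e.symm.surjective.injective_comp_right h₁
      obtain rfl : c = c' :=
        ((isArc_units_smul_iff c⁻¹).2 hu).eq_of_units_smul_pair_sums_eq fun i => by
          rw [smul_inv_smul, hv, smul_inv_smul]
          exact (hsum.choose_spec i).trans (h₂.trans (hsum'.choose_spec i).symm)
      obtain rfl : u = u' := smul_left_cancel _ hv
      rfl
    · rintro ⟨⟨v, w⟩, hv, hw⟩
      obtain ⟨c, hc⟩ := (mem_secantMeet_image_pair_iff hv e).1 hw
      have hsum : HasCommonSum (c • v ∘ e) := ⟨w, hc⟩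
      refine ⟨(c, ⟨c • v ∘ e, (isArc_units_smul_iff c).2 ((isArc_comp_equiv_iff e).2 hv), hsum⟩),
        Subtype.ext (Prod.ext ?_ ?_)⟩
      · simp [f, Function.comp_assoc]
      · exact (hsum.choose_spec (Classical.arbitrary n)).symm.trans (hc _)
  rw [← Nat.card_congr (.ofBijective f hf), Nat.card_prod, Nat.card_fun, Nat.card_eq_fintype_card
    (α := n ⊕ n), Fintype.card_sum, two_mul]

end ConcurrentSecants

section ConcurrentForm

variable {K : Type*} [Field K]

theorem hasCommonSum_linearEquiv_comp_iff {n V : Type*} [AddCommGroup V] [Module K V]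
    {u : n ⊕ n → V} (g : V ≃ₗ[K] V) : HasCommonSum (g ∘ u) ↔ HasCommonSum u := by
  rw [HasCommonSum, HasCommonSum, g.surjective.exists]
  simp only [Function.comp_apply, ← map_add, g.injective.eq_iff]

/-- The family of three pairs with sum `x` in which the first members of the pairs are the standard
basis. -/
def concurrentForm (x : Fin 3 → K) : Fin 3 ⊕ Fin 3 → Fin 3 → K :=
  Sum.elim (fun i => Pi.single i 1) fun i => x - Pi.single i 1

theorem hasCommonSum_and_comp_inl_eq_iff {u : Fin 3 ⊕ Fin 3 → Fin 3 → K} :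
    HasCommonSum u ∧ u ∘ Sum.inl = Pi.basisFun K (Fin 3) ↔ ∃ x, concurrentForm x = u := by
  constructor
  · rintro ⟨⟨x, hx⟩, hu⟩
    have hinl (i : Fin 3) : u (.inl i) = Pi.single i 1 := by
      simpa using congrFun hu i
    refine ⟨x, funext fun k => ?_⟩
    rcases k with i | i
    · exact (hinl i).symm
    · exact sub_eq_of_eq_add' (by rw [← hinl, hx])
  · rintro ⟨x, rfl⟩
    exact ⟨⟨x, fun i => add_sub_cancel _ _⟩, funext fun i => by simp [concurrentForm]⟩

theorem concurrentForm_injective : Function.Injective (concurrentForm (K := K)) :=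
  fun _ _ h => sub_left_injective (congrFun h (.inr 0))

theorem card_isArc_and_hasCommonSum :
    Nat.card {u : Fin 3 ⊕ Fin 3 → Fin 3 → K // IsArc K 3 u ∧ HasCommonSum u} =
      Nat.card ((Fin 3 → K) ≃ₗ[K] (Fin 3 → K)) *
        Nat.card {x : Fin 3 → K // IsArc K 3 (concurrentForm x)} := by
  rw [card_eq_card_linearEquiv_mul_card_normalized (Pi.basisFun K (Fin 3)) Sum.inl
    (fun g _ => and_congr (isArc_linearEquiv_comp_iff g) (hasCommonSum_linearEquiv_comp_iff g))
    fun u hu => hu.1.linearIndependent_comp .inl (by simp)]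
  simp only [and_assoc, hasCommonSum_and_comp_inl_eq_iff]
  congr 1
  let f (x : {x : Fin 3 → K // IsArc K 3 (concurrentForm x)}) :
      {u // IsArc K 3 u ∧ ∃ x, concurrentForm x = u} := ⟨concurrentForm x.1, x.2, x.1, rfl⟩
  refine (Nat.card_congr (.ofBijective f ⟨fun x y h => ?_, ?_⟩)).symm
  · exact Subtype.ext (concurrentForm_injective (congrArg Subtype.val h))
  · rintro ⟨_, hu, x, rfl⟩
    exact ⟨⟨x, hu⟩, rfl⟩

theorem isArc_concurrentForm_iff {x : Fin 3 → K} :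
    IsArc K 3 (concurrentForm x) ↔ (∀ i, x i ≠ 0 ∧ x i ≠ 1) ∧
      x 0 + x 1 ≠ 1 ∧ x 0 + x 2 ≠ 1 ∧ x 1 + x 2 ≠ 1 ∧ x 0 + x 1 + x 2 ≠ 1 := by
  let e : Fin 6 ≃ Fin 3 ⊕ Fin 3 := (finSumFinEquiv (m := 3) (n := 3)).symm
  have hform : concurrentForm x ∘ e = ![![1, 0, 0], ![0, 1, 0], ![0, 0, 1],
      ![x 0 - 1, x 1, x 2], ![x 0, x 1 - 1, x 2], ![x 0, x 1, x 2 - 1]] := by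
    ext i j
    fin_cases i <;> fin_cases j <;> simp [concurrentForm, e, finSumFinEquiv, Fin.addCases]
  rw [← isArc_comp_equiv_iff e, hform, ← realizes_false_iff_isArc (by simp),
    realizes_iff_forall_mem_powersetCard, show (Finset.univ : Finset (Fin 6)) =
      insert 0 (insert 1 (insert 2 (insert 3 (insert 4 (insert 5 ∅))))) from rfl]
  simp +decide only [forall_mem_powersetCard_succ_insert, Finset.mem_insert, Finset.notMem_empty,
    Finset.powersetCard_zero, Finset.mem_singleton, forall_eq]
  simp (disch := decide) only [insert_empty_eq, linearIndepOn_triple_iff_det_ne_zero, not_not]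
  simp [Matrix.det_fin_three, Fin.forall_fin_succ]
  grind

end ConcurrentForm

section ConcurrentFormCount

variable {K : Type*} [Field K] [Fintype K]

/-- The possible first two coordinates of a vector `x` for which `concurrentForm x` is an arc. -/
def concurrentPairs (K : Type*) [Field K] [Fintype K] [DecidableEq K] : Finset (K × K) :=
  {p | (p.1 ≠ 0 ∧ p.1 ≠ 1) ∧ (p.2 ≠ 0 ∧ p.2 ≠ 1) ∧ p.1 + p.2 ≠ 1}

/-- The values that the third coordinate of a vector `x` for which `concurrentForm x` is an arc
cannot take when its first two coordinates are `p`. -/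
def excludedValues [DecidableEq K] (p : K × K) : Finset K :=
  {0, 1, 1 - p.1, 1 - p.2, 1 - p.1 - p.2}

theorem card_isArc_concurrentForm_eq_sum [DecidableEq K] :
    Nat.card {x : Fin 3 → K // IsArc K 3 (concurrentForm x)} =
      ∑ p ∈ concurrentPairs K, (excludedValues p)ᶜ.card := by
  have hiff (x : Fin 3 → K) : IsArc K 3 (concurrentForm x) ↔
      (x 0, x 1) ∈ concurrentPairs K ∧ x 2 ∈ (excludedValues (x 0, x 1))ᶜ := by
    rw [isArc_concurrentForm_iff]
    simp [concurrentPairs, excludedValues, Fin.forall_fin_succ]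
    grind
  rw [← Finset.card_sigma, ← Nat.card_eq_finsetCard]
  exact Nat.card_congr
    { toFun x := ⟨⟨(x.1 0, x.1 1), x.1 2⟩, Finset.mem_sigma.2 ((hiff x.1).1 x.2)⟩
      invFun p := ⟨![p.1.1.1, p.1.1.2, p.1.2], (hiff _).2 (Finset.mem_sigma.1 p.2)⟩
      left_inv x := Subtype.ext (by ext i; fin_cases i <;> rfl)
      right_inv p := rfl }

theorem card_compl_excludedValues [DecidableEq K] {p : K × K} (hp : p ∈ concurrentPairs K) :
    ((excludedValues p)ᶜ.card : ℤ) = Fintype.card K - 5 +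
      ((if p.1 = p.2 then 1 else 0) + if p.1 + p.2 = 0 then 1 else 0) := by
  rw [Finset.card_compl, Nat.cast_sub (Finset.card_le_univ _)]
  obtain ⟨x, y⟩ := p
  simp only [concurrentPairs, Finset.mem_filter_univ] at hp
  by_cases hxy : x = y <;> by_cases hxy' : x + y = 0 <;>
    simp [excludedValues, Finset.card_insert_eq_ite, hxy, hxy'] <;> grind

theorem card_concurrentPairs [DecidableEq K] :
    ((concurrentPairs K).card : ℤ) = (Fintype.card K - 2) * (Fintype.card K - 3) := by
  have hsigma : (concurrentPairs K).card =
      (({0, 1}ᶜ : Finset K).sigma fun x => ({0, 1, 1 - x}ᶜ : Finset K)).card :=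
    Finset.card_nbij' (fun p => ⟨p.1, p.2⟩) (fun p => (p.1, p.2))
      (fun p hp => by simp [concurrentPairs] at hp ⊢; grind)
      (fun p hp => by simp [concurrentPairs] at hp ⊢; grind) (fun _ _ => rfl) fun _ _ => rfl
  have hfiber : ∀ x ∈ ({0, 1}ᶜ : Finset K),
      (({0, 1, 1 - x}ᶜ : Finset K).card : ℤ) = Fintype.card K - 3 := fun x hx => by
    have hx' : x ≠ 0 ∧ x ≠ 1 := by simpa using hx
    rw [Finset.card_compl, Nat.cast_sub (Finset.card_le_univ _),
      Finset.card_eq_three.2 ⟨0, 1, 1 - x, by simp, by grind, by grind, rfl⟩]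
    rfl
  rw [hsigma, Finset.card_sigma, Nat.cast_sum, Finset.sum_congr rfl hfiber, Finset.sum_const,
    nsmul_eq_mul, Finset.card_compl, Finset.card_pair zero_ne_one,
    Nat.cast_sub Fintype.one_lt_card]
  rfl

theorem card_filter_eq_concurrentPairs [DecidableEq K] :
    ({p ∈ concurrentPairs K | p.1 = p.2}.card : ℤ) =
      Fintype.card K - 3 + if (2 : K) = 0 then 1 else 0 := by
  -- When `2 = 0` the element `2⁻¹ = 0` excludes nothing new.
  have himage : {p ∈ concurrentPairs K | p.1 = p.2} =
      ({0, 1, 2⁻¹}ᶜ : Finset K).image fun x => (x, x) := by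
    ext ⟨x, y⟩
    simp [concurrentPairs]
    grind
  rw [himage, Finset.card_image_of_injective _ fun x y h => (Prod.ext_iff.1 h).1,
    Finset.card_compl, Nat.cast_sub (Finset.card_le_univ _)]
  by_cases h2 : (2 : K) = 0 <;> simp [Finset.card_insert_eq_ite, h2] <;> grind

theorem card_filter_add_eq_zero_concurrentPairs [DecidableEq K] :
    ({p ∈ concurrentPairs K | p.1 + p.2 = 0}.card : ℤ) =
      Fintype.card K - 3 + if (2 : K) = 0 then 1 else 0 := by
  have himage : {p ∈ concurrentPairs K | p.1 + p.2 = 0} =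
      ({0, 1, -1}ᶜ : Finset K).image fun x => (x, -x) := by
    ext ⟨x, y⟩
    simp [concurrentPairs]
    grind
  rw [himage, Finset.card_image_of_injective _ fun x y h => (Prod.ext_iff.1 h).1,
    Finset.card_compl, Nat.cast_sub (Finset.card_le_univ _)]
  by_cases h2 : (2 : K) = 0 <;> simp [Finset.card_insert_eq_ite, h2] <;> grind

theorem card_isArc_concurrentForm [DecidableEq K] :
    (Nat.card {x : Fin 3 → K // IsArc K 3 (concurrentForm x)} : ℤ) =
      (Fintype.card K - 2) * (Fintype.card K - 3) * (Fintype.card K - 5) +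
        2 * (Fintype.card K - 3) + 2 * if (2 : K) = 0 then 1 else 0 := by
  rw [card_isArc_concurrentForm_eq_sum, Nat.cast_sum,
    Finset.sum_congr rfl fun p hp => card_compl_excludedValues hp]
  simp only [Finset.sum_add_distrib, Finset.sum_const, Finset.sum_boole, nsmul_eq_mul,
    card_concurrentPairs, card_filter_eq_concurrentPairs, card_filter_add_eq_zero_concurrentPairs]
  ring

end ConcurrentFormCount

section ArcCounts

/-- The order of `PGL(4, q)`, as a polynomial in `q`. -/
def cardPGLFour (q : ℤ) : ℤ :=
  q ^ 6 * (q ^ 2 - 1) * (q ^ 3 - 1) * (q ^ 4 - 1)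

variable (K : Type*) [Field K] [Fintype K]

theorem card_linearEquiv_fin_three :
    (Nat.card ((Fin 3 → K) ≃ₗ[K] (Fin 3 → K)) : ℤ) =
      ((Fintype.card K : ℤ) - 1) ^ 3 * Fintype.card K ^ 3 * (Fintype.card K + 1) *
        ((Fintype.card K : ℤ) ^ 2 + Fintype.card K + 1) := by
  rw [card_linearEquiv_fin_fun, Fin.prod_univ_three]
  norm_num
  ring

theorem card_linearEquiv_fin_four :
    (Nat.card ((Fin 4 → K) ≃ₗ[K] (Fin 4 → K)) : ℤ) =
      ((Fintype.card K : ℤ) - 1) * cardPGLFour (Fintype.card K) := by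
  rw [card_linearEquiv_fin_fun, Fin.prod_univ_four, cardPGLFour]
  norm_num
  ring

theorem sum_card_secantMeet_fin_six :
    ∑ T ∈ matchings (Fin 6) 3, (Nat.card {p : (Fin 6 → Fin 3 → K) × (Fin 3 → K) //
        IsArc K 3 p.1 ∧ p.2 ∈ secantMeet K p.1 T} : ℤ) =
      15 * (((Fintype.card K : ℤ) - 1) ^ 6 * (Nat.card ((Fin 3 → K) ≃ₗ[K] (Fin 3 → K)) *
        Nat.card {x : Fin 3 → K // IsArc K 3 (concurrentForm x)})) := by
  rw [Finset.sum_congr rfl fun T hT => ?_, Finset.sum_const, card_matchings_fin_six_three,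
    nsmul_eq_mul, Nat.cast_ofNat]
  obtain ⟨e, rfl⟩ := exists_equiv_of_mem_matchings hT (by simp)
  rw [card_secantMeet_image_pair, card_isArc_and_hasCommonSum]
  push_cast [natCast_card_units, Fintype.card_fin]
  rfl

theorem card_isArc_fin_seven_fin_three :
    (Nat.card {v : Fin 7 → Fin 3 → K // IsArc K 3 v} : ℤ) =
      Nat.card ((Fin 3 → K) ≃ₗ[K] (Fin 3 → K)) * ((Fintype.card K : ℤ) - 1) ^ 6 *
        (((Fintype.card K : ℤ) - 2) * (Fintype.card K - 3) *
          ((Fintype.card K : ℤ) ^ 2 - 9 * Fintype.card K + 21) *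
          ((Fintype.card K : ℤ) ^ 2 - 14 * Fintype.card K + 55) -
          15 * Nat.card {x : Fin 3 → K // IsArc K 3 (concurrentForm x)}) := by
  have hrank : Module.finrank K (Fin 3 → K) = 3 := Module.finrank_fin_fun K
  obtain ⟨hpoints, hpairs⟩ := card_matchings_fin_one_and_two (k := 6) (by norm_num)
  rw [card_isArc_three_fin_succ hrank (by norm_num), card_isArc_three_fin_six hrank, hpoints,
    hpairs, sum_card_secantMeet_fin_six, card_linearEquiv_fin_three]
  norm_num [Nat.choose]
  ring

theorem card_isArc_fin_seven_fin_four :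
    (Nat.card {v : Fin 7 → Fin 4 → K // IsArc K 4 v} : ℤ) =
      Nat.card ((Fin 4 → K) ≃ₗ[K] (Fin 4 → K)) * ((Fintype.card K : ℤ) - 1) ^ 6 *
        (((Fintype.card K : ℤ) - 2) * (Fintype.card K - 3) *
          ((Fintype.card K : ℤ) ^ 2 - 9 * Fintype.card K + 21) *
          ((Fintype.card K : ℤ) ^ 2 - 14 * Fintype.card K + 55) -
          15 * Nat.card {x : Fin 3 → K // IsArc K 3 (concurrentForm x)}) := by
  have hdual := card_isArc_mul_card_linearEquiv_comm (n := Fin 4) (m := Fin 3) (K := K)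
  rw [Fintype.card_fin, Fintype.card_fin, card_isArc_congr finSumFinEquiv,
    card_isArc_congr finSumFinEquiv] at hdual
  have hGL : (Nat.card ((Fin 3 → K) ≃ₗ[K] (Fin 3 → K)) : ℤ) ≠ 0 := by
    have : Finite ((Fin 3 → K) ≃ₗ[K] (Fin 3 → K)) := Finite.of_injective _ DFunLike.coe_injective
    exact_mod_cast Nat.card_pos.ne'
  zify at hdual
  rw [card_isArc_fin_seven_fin_three] at hdual
  refine mul_right_cancel₀ hGL (hdual.trans ?_)
  ring

end ArcCounts

section ProjectiveCounts

variable {ι : Type*} {F : Type} [Field F]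

theorem Realizes.ne_zero [Finite ι] [Nontrivial ι] {D L : Finset ι → Prop}
    (hDL : DeterminesLines D L) {v : ι → Fin 4 → F} (h : Realizes F 4 D v) (i : ι) :
    v i ≠ 0 := by
  classical
  obtain ⟨j, hij⟩ := exists_ne i
  have hcard := Finset.card_pair hij
  have hLI := (h.linearIndepOn_iff_of_determinesLines hDL hcard.ge).2
    (hDL.exists_of_card_eq_two _ hcard)
  exact hLI.ne_zero (by simp)

theorem card_realizes_eq_card_projective_mul [Finite ι] [Nontrivial ι] [Fintype F]
    {D L : Finset ι → Prop} (hDL : DeterminesLines D L) {P : (ι → ℙ F (Fin 4 → F)) → Prop}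
    (hP : ∀ σ, P σ ↔ Realizes F 4 D fun i => (σ i).rep) :
    (Nat.card {v : ι → Fin 4 → F // Realizes F 4 D v} : ℤ) =
      Nat.card {σ // P σ} * ((Fintype.card F : ℤ) - 1) ^ Nat.card ι := by
  rw [card_eq_card_projective_mul_card_units_pow (fun c _ => realizes_units_smul_iff c)
    fun _ h => h.ne_zero hDL]
  simp only [hP, Nat.cast_mul, Nat.cast_pow, natCast_card_units]

theorem determinesLines_false : DeterminesLines (ι := Fin 7) (fun _ => False) (fun _ => False) :=
  ⟨by decide +kernel, by decide +kernel⟩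

theorem determinesLines_isHyp6Coplanar :
    DeterminesLines IsHyp6Coplanar fun s => s ⊆ {0, 1, 2} ∨ s ⊆ {3, 4, 5} :=
  ⟨by decide +kernel, by decide +kernel⟩

theorem determinesLines_h1 :
    DeterminesLines (IsCoplanarIn h1planes) fun s => ∃ l ∈ (∅ : Finset (Finset (Fin 7))), s ⊆ l :=
  ⟨by decide +kernel, by decide +kernel⟩

theorem determinesLines_h2 :
    DeterminesLines (IsCoplanarIn h2planes) fun s => ∃ l ∈ (∅ : Finset (Finset (Fin 7))), s ⊆ l :=
  ⟨by decide +kernel, by decide +kernel⟩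

theorem determinesLines_h3 :
    DeterminesLines (IsCoplanarIn h3planes) fun s => ∃ l ∈ h3lines, s ⊆ l :=
  ⟨by decide +kernel, by decide +kernel⟩

theorem determinesLines_h5 :
    DeterminesLines (IsCoplanarIn h5planes) fun s => ∃ l ∈ h5lines, s ⊆ l :=
  ⟨by decide +kernel, by decide +kernel⟩

theorem isArc4_iff_realizes {σ : Fin 7 → ℙ F (Fin 4 → F)} :
    IsArc4 F σ ↔ Realizes F 4 (fun _ => False) fun i => (σ i).rep := by
  simp only [IsArc4, ← iff_false (Coplanar4 F _ _ _ _),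
    forall_coplanar4_iff_realizes (D := fun _ => False)]
  exact ⟨And.right, fun h => ⟨((isRealization_iff_realizes determinesLines_false).2 h).1, h⟩⟩

end ProjectiveCounts

section ClosedForms

variable (F : Type) [Field F] [Fintype F]

theorem card_sub_one_ne_zero : (Fintype.card F : ℤ) - 1 ≠ 0 := by
  rw [← natCast_card_units]
  exact_mod_cast Nat.card_pos.ne'

open Classical in
theorem card_isArc4 :
    (Nat.card {σ : Fin 7 → ℙ F (Fin 4 → F) // IsArc4 F σ} : ℤ) =
      cardPGLFour (Fintype.card F) *
        (((Fintype.card F : ℤ) - 2) * (Fintype.card F - 3) *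
          ((Fintype.card F : ℤ) ^ 2 - 9 * Fintype.card F + 21) *
          ((Fintype.card F : ℤ) ^ 2 - 14 * Fintype.card F + 55) -
          15 * (((Fintype.card F : ℤ) - 2) * (Fintype.card F - 3) * (Fintype.card F - 5) +
            2 * (Fintype.card F - 3) + 2 * if (2 : F) = 0 then 1 else 0)) := by
  have hcard := card_realizes_eq_card_projective_mul (P := IsArc4 F) determinesLines_false
    fun _ => isArc4_iff_realizes
  simp only [realizes_false_iff_isArc (ι := Fin 7) (r := 4) (by simp)] at hcard
  rw [card_isArc_fin_seven_fin_four, card_isArc_concurrentForm, card_linearEquiv_fin_four,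
    Nat.card_fin] at hcard
  refine mul_right_cancel₀ (pow_ne_zero 7 (card_sub_one_ne_zero F)) (hcard.symm.trans ?_)
  ring

open Classical in
theorem card_isConfigReal_of_isFanoCoplanar {planes : Finset (Finset (Fin 7))} {E : Prop}
    (hDL : DeterminesLines (IsCoplanarIn planes) fun s =>
      ∃ l ∈ (∅ : Finset (Finset (Fin 7))), s ⊆ l)
    (hE : ∀ s, s.card = 4 → (IsCoplanarIn planes s ↔ IsFanoCoplanar E s)) :
    (Nat.card {σ : Fin 7 → ℙ F (Fin 4 → F) // IsConfigReal F planes ∅ σ} : ℤ) =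
      if (2 : F) = 0 ↔ E then cardPGLFour (Fintype.card F) else 0 := by
  have hcard := card_realizes_eq_card_projective_mul (P := IsConfigReal F planes ∅) hDL
    fun _ => isRealization_iff_realizes hDL
  simp only [realizes_congr hE] at hcard
  rw [card_realizes_isFanoCoplanar, Nat.card_fin] at hcard
  refine mul_right_cancel₀ (pow_ne_zero 7 (card_sub_one_ne_zero F)) (hcard.symm.trans ?_)
  split_ifs
  · rw [Nat.cast_mul, Nat.cast_pow, card_linearEquiv_fin_four, natCast_card_units]
    ring
  · rw [Nat.cast_zero, zero_mul]

open Classical in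
theorem card_isConfigReal_h1 :
    (Nat.card {σ : Fin 7 → ℙ F (Fin 4 → F) // IsConfigReal F h1planes ∅ σ} : ℤ) =
      if (2 : F) = 0 then 0 else cardPGLFour (Fintype.card F) := by
  rw [card_isConfigReal_of_isFanoCoplanar F determinesLines_h1 (E := False)]
  · simp only [iff_false, ite_not]
  · simp only [IsFanoCoplanar, and_false, or_false]
    decide +kernel

open Classical in
theorem card_isConfigReal_h2 :
    (Nat.card {σ : Fin 7 → ℙ F (Fin 4 → F) // IsConfigReal F h2planes ∅ σ} : ℤ) =
      if (2 : F) = 0 then cardPGLFour (Fintype.card F) else 0 := by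
  rw [card_isConfigReal_of_isFanoCoplanar F determinesLines_h2 (E := True)]
  · simp only [iff_true]
  · simp only [IsFanoCoplanar, and_true]
    decide +kernel

theorem card_isConfigReal_h3 :
    (Nat.card {σ : Fin 7 → ℙ F (Fin 4 → F) // IsConfigReal F h3planes h3lines σ} : ℤ) =
      cardPGLFour (Fintype.card F) * (Fintype.card F - 2) := by
  have hcard := card_realizes_eq_card_projective_mul (P := IsConfigReal F h3planes h3lines)
    determinesLines_h3 fun _ => isRealization_iff_realizes determinesLines_h3
  rw [card_realizes_h3planes, Nat.card_fin] at hcard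
  push_cast [card_linearEquiv_fin_four, natCast_card_units, card_ne_zero_and_ne_one] at hcard
  refine mul_right_cancel₀ (pow_ne_zero 7 (card_sub_one_ne_zero F)) (hcard.symm.trans ?_)
  ring

theorem card_isConfigReal_h5_mul :
    (Nat.card {σ : Fin 7 → ℙ F (Fin 4 → F) // IsConfigReal F h5planes h5lines σ} : ℤ) *
        (Fintype.card F - 1) = cardPGLFour (Fintype.card F) * (Fintype.card F - 2) := by
  have hcard := card_realizes_eq_card_projective_mul (P := IsConfigReal F h5planes h5lines)
    determinesLines_h5 fun _ => isRealization_iff_realizes determinesLines_h5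
  rw [card_realizes_h5planes, Nat.card_fin] at hcard
  push_cast [card_linearEquiv_fin_four, natCast_card_units, card_ne_zero_and_ne_one] at hcard
  refine mul_right_cancel₀ (pow_ne_zero 6 (card_sub_one_ne_zero F)) ?_
  rw [mul_assoc, ← pow_succ']
  refine hcard.symm.trans ?_
  ring

theorem card_isHyp6Real_mul :
    (Nat.card {σ : Fin 6 → ℙ F (Fin 4 → F) // IsHyp6Real F σ} : ℤ) * (Fintype.card F - 1) =
      cardPGLFour (Fintype.card F) := by
  have hcard := card_realizes_eq_card_projective_mul (P := IsHyp6Real F)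
    determinesLines_isHyp6Coplanar
    fun _ => isRealization_iff_realizes determinesLines_isHyp6Coplanar
  rw [card_realizes_isHyp6Coplanar, Nat.card_fin] at hcard
  push_cast [card_linearEquiv_fin_four, natCast_card_units] at hcard
  refine mul_right_cancel₀ (pow_ne_zero 5 (card_sub_one_ne_zero F)) ?_
  rw [mul_assoc, ← pow_succ']
  refine hcard.symm.trans ?_
  ring

end ClosedForms

/-- `C_{7,4}(q)` as a linear combination of strong-realization counts of the
hyperfigurations on at most 7 points. -/
theorem C74_via_hyperfigurations (F : Type) [Field F] [Fintype F]
    (q : ℕ) (hq : q = Fintype.card F) :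
    (Nat.card {σ : Fin 7 → ℙ F (Fin 4 → F) // IsArc4 F σ} : ℤ) =
      (q : ℤ)^21 - 28*(q : ℤ)^20 + 322*(q : ℤ)^19 - 1925*(q : ℤ)^18 + 5571*(q : ℤ)^17
        + 839*(q : ℤ)^16 - 18320*(q : ℤ)^15 - 2695*(q : ℤ)^14 + 7455*(q : ℤ)^13
        + 19111*(q : ℤ)^12 + 17074*(q : ℤ)^11 - 9540*(q : ℤ)^10 - 13027*(q : ℤ)^9
        - 19922*(q : ℤ)^8 + 924*(q : ℤ)^7 + 14160*(q : ℤ)^6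
        + (595*(q : ℤ)^3 - 8260*(q : ℤ)^2 + 20160*(q : ℤ) - 8820) *
            (Nat.card {σ : Fin 6 → ℙ F (Fin 4 → F) // IsHyp6Real F σ} : ℤ)
        + 210 * (Nat.card {σ : Fin 7 → ℙ F (Fin 4 → F) // IsConfigReal F h1planes ∅ σ} : ℤ)
        + 180 * (Nat.card {σ : Fin 7 → ℙ F (Fin 4 → F) // IsConfigReal F h2planes ∅ σ} : ℤ)
        - 2520 * (Nat.card {σ : Fin 7 → ℙ F (Fin 4 → F) //
            IsConfigReal F h3planes h3lines σ} : ℤ)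
        + 3780 * (Nat.card {σ : Fin 7 → ℙ F (Fin 4 → F) //
            IsConfigReal F h5planes h5lines σ} : ℤ) := by
  classical
  subst hq
  have h5 := card_isConfigReal_h5_mul F
  have h6 := card_isHyp6Real_mul F
  refine mul_right_cancel₀ (card_sub_one_ne_zero F) ?_
  rw [card_isArc4, card_isConfigReal_h1, card_isConfigReal_h2, card_isConfigReal_h3]
  rw [cardPGLFour] at *
  by_cases h2 : (2 : F) = 0 <;> simp only [h2, if_true, if_false] <;>
    linear_combination -(595 * (Fintype.card F : ℤ) ^ 3 - 8260 * (Fintype.card F : ℤ) ^ 2 +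
      20160 * Fintype.card F - 8820) * h6 - 3780 * h5
end

section
/- For every prime power q, the number of strong realizations of the hyperfiguration h_1 in P^3(F_q) is A_{h_1}(4,q) = (1 − a(q)) · |PGL_4(F_q)|, where a(q) = 1 if q is even and a(q) = 0 if q is odd. In particular there are no such realizations when q is even. -/
open scoped LinearAlgebra.Projectivization

/-!
In a strong realization of `h₁` the points `0, 3, 5, 6` together with `4` are in general position,
so they form a projective frame, and `PGL₄` acts simply transitively on projective frames. It
therefore suffices to find the realizations in which this frame is the standard one.

Order the coordinates by the points `0, 3, 5, 6`. The planes `0145` and `1346` force point `1` to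
be `(a, b, a, b)`, and `2345` and `0246` force point `2` to be `(c, d, d, c)`. The planes `0123`
and `1256` then read `a c = b d` and `a d = b c`, whence `a² = b²`. As `1345` is not a plane,
`a ≠ b`, so `a = -b` and `c = -d`. This is impossible in characteristic two. Otherwise it leaves
one candidate, whose points have coordinates in `{0, 1, -1}`; it is a realization because over `ℤ`
each determinant attached to four points is `0` when they should be coplanar, and divides `4` when
they should not.
-/

open scoped MatrixGroups
open Projectivization Function

section ProjectiveFrame

theorem independent_mk_iff {ι K V : Type*} [DivisionRing K] [AddCommGroup V] [Module K V]
    {v : ι → V} (hv : ∀ i, v i ≠ 0) :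
    Independent (fun i => mk K (v i) (hv i)) ↔ LinearIndependent K v := by
  choose a ha using fun i => exists_smul_eq_mk_rep K (v i) (hv i)
  have hrep : Projectivization.rep ∘ (fun i => mk K (v i) (hv i)) = a • v :=
    funext fun i => (ha i).symm
  rw [independent_iff, hrep, LinearIndependent.units_smul_iff]

theorem exists_forall_ne_zero_sum_smul_eq {ι R M : Type*} [Fintype ι] [DecidableEq ι]
    [Ring R] [Nontrivial R] [AddCommGroup M] [Module R M] {v : ι → M} {u : M}
    (hspan : u ∈ Submodule.span R (Set.range v))
    (hu : ∀ i, LinearIndependent R (update v i u)) :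
    ∃ c : ι → R, (∀ i, c i ≠ 0) ∧ ∑ i, c i • v i = u := by
  obtain ⟨c, hc⟩ := (Submodule.mem_span_range_iff_exists_fun R).1 hspan
  refine ⟨c, fun i hci => ?_, hc⟩
  have hu_notMem := (hu i).notMem_span_image (s := {i}ᶜ) (x := i) (by simp)
  rw [update_self] at hu_notMem
  refine hu_notMem (hc ▸ Submodule.sum_mem _ fun j _ => ?_)
  obtain rfl | hji := eq_or_ne j i
  · simp [hci]
  · exact Submodule.smul_mem _ _ (Submodule.subset_span ⟨j, hji, update_of_ne hji _ _⟩)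

variable {ι K : Type*} [Field K]

/-- The point of `ℙ K (ι → K)` with all homogeneous coordinates equal to `1`. -/
def unitPoint (ι K : Type*) [Field K] [Nonempty ι] : ℙ K (ι → K) :=
  mk K 1 one_ne_zero

variable [DecidableEq ι]

/-- The point of `ℙ K (ι → K)` spanned by the `i`-th standard basis vector. -/
def coordPoint (K : Type*) [Field K] (i : ι) : ℙ K (ι → K) :=
  mk K (Pi.single i 1) (Pi.single_ne_zero_iff.2 one_ne_zero)

/-- The points `p i` and `u` form a projective frame of `ℙ K (ι → K)`: together they are
`card ι + 1` points any `card ι` of which are independent. -/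
structure IsProjectiveFrame (p : ι → ℙ K (ι → K)) (u : ℙ K (ι → K)) : Prop where
  independent : Independent p
  independent_update : ∀ i, Independent (update p i u)

variable [Fintype ι]

theorem independent_mk_iff_det_ne_zero {v : ι → ι → K} (hv : ∀ i, v i ≠ 0) :
    Independent (fun i => mk K (v i) (hv i)) ↔ (Matrix.of v).det ≠ 0 := by
  rw [independent_mk_iff, ← isUnit_iff_ne_zero, ← Matrix.isUnit_iff_isUnit_det,
    ← Matrix.linearIndependent_rows_iff_isUnit]
  rfl

theorem exists_linearEquiv_submodule_smul (g : PGL(ι, K)) :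
    ∃ e : (ι → K) ≃ₗ[K] (ι → K), ∀ x : ℙ K (ι → K),
      (g • x).submodule = x.submodule.map e.toLinearMap := by
  cases g with | mk A
  refine ⟨DistribMulAction.toLinearEquiv K (ι → K) A, fun x => ?_⟩
  induction x using Projectivization.ind with | h v hv
  rw [PGL.mk_smul_mk, submodule_mk, submodule_mk, Submodule.map_span, Set.image_singleton]
  rfl

variable [Nonempty ι]

theorem IsProjectiveFrame.exists_smul_eq {p : ι → ℙ K (ι → K)} {u : ℙ K (ι → K)}
    (h : IsProjectiveFrame p u) :
    ∃ g : PGL(ι, K), (∀ i, g • coordPoint K i = p i) ∧ g • unitPoint ι K = u := by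
  have hp : LinearIndependent K (Projectivization.rep ∘ p) := independent_iff.1 h.independent
  have hspan : Submodule.span K (Set.range (Projectivization.rep ∘ p)) = ⊤ :=
    hp.span_eq_top_of_card_eq_finrank' (by simp)
  have hupdate (i : ι) : LinearIndependent K (update (Projectivization.rep ∘ p) i u.rep) := by
    rw [← comp_update]
    exact independent_iff.1 (h.independent_update i)
  obtain ⟨c, hc, hsum⟩ := exists_forall_ne_zero_sum_smul_eq (hspan ▸ Submodule.mem_top) hupdate
  let A : Matrix ι ι K := (Matrix.of fun i => c i • (p i).rep).transpose
  have hA : IsUnit A := by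
    rw [← Matrix.linearIndependent_cols_iff_isUnit]
    exact hp.units_smul fun i => Units.mk0 (c i) (hc i)
  refine ⟨.mk hA.unit, fun i => ?_, ?_⟩
  · rw [← (p i).mk_rep, coordPoint, PGL.mk_smul_mk, mk_eq_mk_iff']
    exact ⟨c i, (Matrix.mulVec_single_one A i).symm⟩
  · rw [← u.mk_rep, unitPoint, PGL.mk_smul_mk, mk_eq_mk_iff']
    refine ⟨1, ?_⟩
    rw [one_smul, ← hsum]
    exact (Matrix.mulVec_one A).symm

theorem eq_one_of_smul_coordPoint_eq {g : PGL(ι, K)}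
    (hcoord : ∀ i : ι, g • coordPoint K i = coordPoint K i)
    (hunit : g • unitPoint ι K = unitPoint ι K) : g = 1 := by
  cases g with | mk A
  simp only [coordPoint, unitPoint, PGL.mk_smul_mk, mk_eq_mk_iff'] at hcoord hunit
  choose d hd using hcoord
  obtain ⟨t, ht⟩ := hunit
  have hdiag : Matrix.diagonal d = A.val := Matrix.ext_of_mulVec_single fun i => by
    refine Eq.trans ?_ (hd i)
    rw [Matrix.diagonal_mulVec_single, ← Pi.single_smul, smul_eq_mul]
  have hdt : d = fun _ => t := funext fun i => by
    simpa [Units.smul_def, ← hdiag, Matrix.mulVec_diagonal] using (congrFun ht i).symm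
  rw [Matrix.ProjGenLinGroup.mk_eq_one,
    Matrix.GeneralLinearGroup.mem_center_iff_val_mem_range_scalar]
  exact ⟨t, by rw [← hdiag, hdt]; rfl⟩

theorem card_PGL_mul_card_units (R : Type*) [CommRing R] :
    Nat.card PGL(ι, R) * Nat.card Rˣ = Nat.card (GL ι R) := by
  have hscalar : Injective (Matrix.GeneralLinearGroup.scalar ι : Rˣ →* GL ι R) :=
    Units.map_injective fun _ _ => Matrix.scalar_inj.1
  have hcenter : Nat.card (Subgroup.center (GL ι R)) = Nat.card Rˣ := by
    rw [Matrix.GeneralLinearGroup.center_eq_range_scalar,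
      Nat.card_congr (MonoidHom.ofInjective hscalar).toEquiv]
  rw [Subgroup.card_eq_card_quotient_mul_card_subgroup (Subgroup.center (GL ι R)), hcenter]
  rfl

end ProjectiveFrame

section Realization

variable {F : Type} [Field F] {x y z : ℙ F (Fin 4 → F)} {σ : Fin 7 → ℙ F (Fin 4 → F)}
  {planes lines : Finset (Finset (Fin 7))}

theorem collinear3_smul_iff (g : PGL(Fin 4, F)) :
    Collinear3 F (g • x) (g • y) (g • z) ↔ Collinear3 F x y z := by
  obtain ⟨e, he⟩ := exists_linearEquiv_submodule_smul g
  rw [Collinear3, he, he, he, ← Submodule.map_sup, ← Submodule.map_sup, e.finrank_map_eq,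
    Collinear3]

theorem coplanar4_smul_iff (g : PGL(Fin 4, F)) {w : ℙ F (Fin 4 → F)} :
    Coplanar4 F (g • x) (g • y) (g • z) (g • w) ↔ Coplanar4 F x y z w := by
  obtain ⟨e, he⟩ := exists_linearEquiv_submodule_smul g
  rw [Coplanar4, he, he, he, he, ← Submodule.map_sup, ← Submodule.map_sup,
    ← Submodule.map_sup, e.finrank_map_eq, Coplanar4]

theorem isConfigReal_smul_iff (g : PGL(Fin 4, F)) :
    IsConfigReal F planes lines (g • σ) ↔ IsConfigReal F planes lines σ := by
  have hinj : Injective (g • σ) ↔ Injective σ := (MulAction.injective g).of_comp_iff σ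
  simp only [IsConfigReal, hinj, Pi.smul_apply, collinear3_smul_iff, coplanar4_smul_iff]

theorem Collinear3.coplanar4 (h : Collinear3 F x y z) (w : ℙ F (Fin 4 → F)) :
    Coplanar4 F x y z w :=
  (Submodule.finrank_add_le_finrank_add_finrank _ _).trans
    (add_le_add h (finrank_submodule w).le)

theorem coplanar4_iff_not_independent (p : Fin 4 → ℙ F (Fin 4 → F)) :
    Coplanar4 F (p 0) (p 1) (p 2) (p 3) ↔ ¬ Independent p := by
  have hspan : (p 0).submodule ⊔ (p 1).submodule ⊔ (p 2).submodule ⊔ (p 3).submodule =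
      Submodule.span F (Set.range (Projectivization.rep ∘ p)) := by
    rw [Submodule.span_range_eq_iSup, ← Finset.sup_univ_eq_iSup]
    simp [submodule_eq, Fin.univ_succ, sup_assoc]
  have hle := finrank_range_le_card (R := F) (Projectivization.rep ∘ p)
  rw [Coplanar4, hspan, independent_iff, linearIndependent_iff_card_eq_finrank_span]
  simp only [Set.finrank, Fintype.card_fin] at hle ⊢
  omega

/-- The points indexed by the quadruple `e` all lie on one of the listed planes. -/
abbrev IsPlanar (planes : Finset (Finset (Fin 7))) (e : Fin 4 → Fin 7) : Prop :=
  ∃ h ∈ planes, ∀ i, e i ∈ h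

theorem isPlanar_iff_subset {e : Fin 4 → Fin 7} :
    IsPlanar planes e ↔ ∃ h ∈ planes, ({e 0, e 1, e 2, e 3} : Finset (Fin 7)) ⊆ h := by
  simp [IsPlanar, Fin.forall_fin_succ, Finset.insert_subset_iff]

theorem injective_vec_four_iff {α : Type*} {a b c d : α} :
    Injective ![a, b, c, d] ↔ a ≠ b ∧ a ≠ c ∧ a ≠ d ∧ b ≠ c ∧ b ≠ d ∧ c ≠ d := by
  rw [← List.nodup_ofFn]
  simp [and_assoc]

theorem IsConfigReal.independent_iff (h : IsConfigReal F planes lines σ) {e : Fin 4 → Fin 7}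
    (he : Injective e) : Independent (σ ∘ e) ↔ ¬ IsPlanar planes e := by
  have hcop := coplanar4_iff_not_independent (σ ∘ e)
  simp only [comp_apply] at hcop
  rw [isPlanar_iff_subset, ← h.2.2, hcop, not_not]
  all_goals exact he.ne (by decide)

theorem isConfigReal_of_independent_iff
    (hextend : ∀ a b c, a ≠ b → a ≠ c → b ≠ c →
      ∃ d, Injective ![a, b, c, d] ∧ ¬ IsPlanar planes ![a, b, c, d])
    (hσ : ∀ e, Injective e → (Independent (σ ∘ e) ↔ ¬ IsPlanar planes e)) :
    IsConfigReal F planes ∅ σ := by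
  refine ⟨fun a b hab => ?_, fun a b c hab hac hbc => ?_,
    fun a b c d hab hac had hbc hbd hcd => ?_⟩
  · by_contra hne
    have hthird : ∀ a b : Fin 7, ∃ c, a ≠ c ∧ b ≠ c := by decide
    obtain ⟨c, hac, hbc⟩ := hthird a b
    obtain ⟨d, hinj, hd⟩ := hextend a b c hne hac hbc
    have hrep := (independent_iff.1 ((hσ _ hinj).2 hd)).injective
    exact zero_ne_one (hrep (congrArg Projectivization.rep hab) : (0 : Fin 4) = 1)
  · obtain ⟨d, hinj, hd⟩ := hextend a b c hab hac hbc
    simp only [Finset.notMem_empty, false_and, exists_false, iff_false]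
    intro hcol
    exact (coplanar4_iff_not_independent (σ ∘ ![a, b, c, d])).1 (hcol.coplanar4 _)
      ((hσ _ hinj).2 hd)
  · have hinj := injective_vec_four_iff.2 ⟨hab, hac, had, hbc, hbd, hcd⟩
    have hcop := coplanar4_iff_not_independent (σ ∘ ![a, b, c, d])
    rw [hσ _ hinj, not_not, isPlanar_iff_subset] at hcop
    exact hcop

theorem IsConfigReal.det_eq_zero_iff {v : Fin 7 → Fin 4 → F} {hv : ∀ i, v i ≠ 0}
    (h : IsConfigReal F planes lines fun i => mk F (v i) (hv i)) {e : Fin 4 → Fin 7}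
    (he : Injective e) : (Matrix.of (v ∘ e)).det = 0 ↔ IsPlanar planes e := by
  rw [← not_iff_not, ← h.independent_iff he]
  exact (independent_mk_iff_det_ne_zero fun i => hv (e i)).symm

end Realization

section ModelDeterminants

theorem exists_strictMono_associated_det {α R : Type*} [LinearOrder α] [CommRing R] {n : ℕ}
    (v : α → Fin n → R) {e : Fin n → α} (he : Injective e) :
    ∃ π : Equiv.Perm (Fin n), StrictMono (e ∘ π) ∧
      Associated (Matrix.of (v ∘ e ∘ π)).det (Matrix.of (v ∘ e)).det := by
  refine ⟨Tuple.sort e, (Tuple.monotone_sort e).strictMono_of_injective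
    (he.comp (Equiv.injective _)), ?_⟩
  have hperm : Matrix.of (v ∘ e ∘ Tuple.sort e) =
      (Matrix.of (v ∘ e)).submatrix (Tuple.sort e) id := rfl
  rw [hperm, Matrix.det_permute]
  exact associated_unit_mul_left _ _ ((Equiv.Perm.sign (Tuple.sort e)).isUnit.map
    (Int.castRingHom R))

variable {R : Type*} [CommRing R]

/-- Homogeneous coordinates of seven points of which `0, 3, 5, 6` and `4` form the standard
projective frame, while `1` and `2` are spanned by `x` and `y`. -/
def frameVec (x y : Fin 4 → R) : Fin 7 → Fin 4 → R :=
  ![Pi.single 0 1, x, y, Pi.single 1 1, 1, Pi.single 2 1, Pi.single 3 1]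

theorem det_frameVec (x y : Fin 4 → R) :
    (Matrix.of (frameVec x y ∘ ![0, 1, 4, 5])).det = x 3 - x 1 ∧
    (Matrix.of (frameVec x y ∘ ![1, 3, 4, 6])).det = x 0 - x 2 ∧
    (Matrix.of (frameVec x y ∘ ![2, 3, 4, 5])).det = y 3 - y 0 ∧
    (Matrix.of (frameVec x y ∘ ![0, 2, 4, 6])).det = y 1 - y 2 ∧
    (Matrix.of (frameVec x y ∘ ![0, 1, 2, 3])).det = x 2 * y 3 - x 3 * y 2 ∧
    (Matrix.of (frameVec x y ∘ ![1, 2, 5, 6])).det = x 0 * y 1 - x 1 * y 0 ∧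
    (Matrix.of (frameVec x y ∘ ![1, 3, 4, 5])).det = x 3 - x 0 ∧
    (Matrix.of (frameVec x y ∘ ![1, 3, 5, 6])).det = x 0 ∧
    (Matrix.of (frameVec x y ∘ ![2, 3, 5, 6])).det = y 0 := by
  refine ⟨?_, ?_, ?_, ?_, ?_, ?_, ?_, ?_, ?_⟩ <;>
    simp [frameVec, Matrix.det_succ_row_zero, Fin.sum_univ_succ, Fin.succAbove, Pi.single_apply,
      pow_succ, neg_add_eq_sub, ← sub_eq_add_neg]

/-- Homogeneous coordinates of the realization of `h₁` in standard position. -/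
def h1Vec (R : Type*) [CommRing R] : Fin 7 → Fin 4 → R :=
  frameVec ![1, -1, 1, -1] ![1, -1, -1, 1]

theorem h1Vec_ne_zero [Nontrivial R] (i : Fin 7) : h1Vec R i ≠ 0 := by
  intro h
  fin_cases i <;> simp [h1Vec, frameVec] at h

theorem det_h1Vec_int_of_strictMono {e : Fin 4 → Fin 7} (he : StrictMono e) :
    (IsPlanar h1planes e → (Matrix.of (h1Vec ℤ ∘ e)).det = 0) ∧
      (¬ IsPlanar h1planes e → (Matrix.of (h1Vec ℤ ∘ e)).det ∣ 4) := by
  have htable : ∀ a b : Fin 7, a < b → ∀ c, b < c → ∀ d, c < d →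
      (IsPlanar h1planes ![a, b, c, d] → (Matrix.of (h1Vec ℤ ∘ ![a, b, c, d])).det = 0) ∧
        (¬ IsPlanar h1planes ![a, b, c, d] →
          (Matrix.of (h1Vec ℤ ∘ ![a, b, c, d])).det ∣ 4) := by
    decide +kernel
  have h01 : e 0 < e 1 := he (by decide)
  have h12 : e 1 < e 2 := he (by decide)
  have h23 : e 2 < e 3 := he (by decide)
  have hvec : e = ![e 0, e 1, e 2, e 3] := by
    ext i
    fin_cases i <;> rfl
  rw [hvec]
  exact htable _ _ h01 _ h12 _ h23

theorem det_h1Vec_int {e : Fin 4 → Fin 7} (he : Injective e) :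
    (IsPlanar h1planes e → (Matrix.of (h1Vec ℤ ∘ e)).det = 0) ∧
      (¬ IsPlanar h1planes e → (Matrix.of (h1Vec ℤ ∘ e)).det ∣ 4) := by
  obtain ⟨π, hmono, hdet⟩ := exists_strictMono_associated_det (h1Vec ℤ) he
  have hplanar : IsPlanar h1planes (e ∘ π) ↔ IsPlanar h1planes e :=
    exists_congr fun h => and_congr_right' (π.forall_congr_right (q := fun i => e i ∈ h))
  have htable := det_h1Vec_int_of_strictMono hmono
  rwa [hplanar, hdet.eq_zero_iff, hdet.dvd_iff_dvd_left] at htable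

theorem h1Vec_eq_intCast (i : Fin 7) (j : Fin 4) : h1Vec R i j = (h1Vec ℤ i j : R) := by
  fin_cases i <;> fin_cases j <;> simp [h1Vec, frameVec]

theorem det_h1Vec_eq_intCast (e : Fin 4 → Fin 7) :
    (Matrix.of (h1Vec R ∘ e)).det = ((Matrix.of (h1Vec ℤ ∘ e)).det : R) := by
  rw [Int.cast_det]
  exact congrArg Matrix.det (Matrix.ext fun i j => h1Vec_eq_intCast _ _)

end ModelDeterminants

section Classification

variable {F : Type} [Field F] {σ : Fin 7 → ℙ F (Fin 4 → F)} {lines : Finset (Finset (Fin 7))}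

/-- The realization of `h₁` in standard position. -/
def h1Model (F : Type) [Field F] (i : Fin 7) : ℙ F (Fin 4 → F) :=
  mk F (h1Vec F i) (h1Vec_ne_zero i)

theorem independent_h1Model_iff (h2 : (2 : F) ≠ 0) {e : Fin 4 → Fin 7} (he : Injective e) :
    Independent (h1Model F ∘ e) ↔ ¬ IsPlanar h1planes e := by
  have hmodel : Independent (h1Model F ∘ e) ↔ ((Matrix.of (h1Vec ℤ ∘ e)).det : F) ≠ 0 := by
    rw [← det_h1Vec_eq_intCast]
    exact independent_mk_iff_det_ne_zero fun i => h1Vec_ne_zero (e i)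
  rw [hmodel]
  obtain ⟨hzero, hdvd⟩ := det_h1Vec_int he
  refine ⟨fun hdet hplanar => hdet (by rw [hzero hplanar, Int.cast_zero]), fun hplanar hdet => ?_⟩
  have hdvd4 : ((Matrix.of (h1Vec ℤ ∘ e)).det : F) ∣ 4 := by
    simpa using map_dvd (Int.castRingHom F) (hdvd hplanar)
  have h4 : (4 : F) = 0 := zero_dvd_iff.1 (hdet ▸ hdvd4)
  exact h2 (pow_eq_zero_iff two_ne_zero |>.1 (by linear_combination h4))

theorem isConfigReal_h1Model (h2 : (2 : F) ≠ 0) :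
    IsConfigReal F h1planes ∅ (h1Model F) := by
  refine isConfigReal_of_independent_iff ?_ fun _ => independent_h1Model_iff h2
  simp only [injective_vec_four_iff]
  decide +kernel

theorem IsConfigReal.isProjectiveFrame (h : IsConfigReal F h1planes lines σ) :
    IsProjectiveFrame (σ ∘ ![0, 3, 5, 6]) (σ 4) where
  independent := (h.independent_iff (by decide)).2 (by decide)
  independent_update i := by
    have hinj : ∀ i, Injective (update ![0, 3, 5, 6] i (4 : Fin 7)) := by decide
    have hplanar : ∀ i, ¬ IsPlanar h1planes (update ![0, 3, 5, 6] i 4) := by decide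
    rw [← comp_update]
    exact (h.independent_iff (hinj i)).2 (hplanar i)

theorem eq_smul_of_isConfigReal_frameVec {x y : Fin 4 → F} {hv : ∀ i, frameVec x y i ≠ 0}
    (h : IsConfigReal F h1planes lines fun i => mk F (frameVec x y i) (hv i)) :
    (2 : F) ≠ 0 ∧ x = x 0 • ![1, -1, 1, -1] ∧ y = y 0 • ![1, -1, -1, 1] := by
  have hplanar {e : Fin 4 → Fin 7} (he : Injective e) (hp : IsPlanar h1planes e) :=
    (h.det_eq_zero_iff he).2 hp
  have hnonplanar {e : Fin 4 → Fin 7} (he : Injective e) (hp : ¬ IsPlanar h1planes e) :=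
    mt (h.det_eq_zero_iff he).1 hp
  obtain ⟨h0145, h1346, h2345, h0246, h0123, h1256, h1345, h1356, h2356⟩ := det_frameVec x y
  have hx31 : x 3 = x 1 := sub_eq_zero.1 (h0145 ▸ hplanar (by decide) (by decide))
  have hx02 : x 0 = x 2 := sub_eq_zero.1 (h1346 ▸ hplanar (by decide) (by decide))
  have hy30 : y 3 = y 0 := sub_eq_zero.1 (h2345 ▸ hplanar (by decide) (by decide))
  have hy12 : y 1 = y 2 := sub_eq_zero.1 (h0246 ▸ hplanar (by decide) (by decide))
  have hx2y3 : x 2 * y 3 = x 3 * y 2 := sub_eq_zero.1 (h0123 ▸ hplanar (by decide) (by decide))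
  have hx0y1 : x 0 * y 1 = x 1 * y 0 := sub_eq_zero.1 (h1256 ▸ hplanar (by decide) (by decide))
  have hx30 : x 3 ≠ x 0 := sub_ne_zero.1 (h1345 ▸ hnonplanar (by decide) (by decide))
  have hx0 : x 0 ≠ 0 := h1356 ▸ hnonplanar (by decide) (by decide)
  have hy0 : y 0 ≠ 0 := h2356 ▸ hnonplanar (by decide) (by decide)
  rw [← hx02, hy30, hx31, ← hy12] at hx2y3
  have hsq : x 1 ^ 2 = x 0 ^ 2 := by
    refine mul_right_cancel₀ hy0 ?_
    linear_combination -x 0 * hx2y3 - x 1 * hx0y1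
  have hx1 : x 1 = -x 0 :=
    (sq_eq_sq_iff_eq_or_eq_neg.1 hsq).resolve_left fun hx10 => hx30 (hx31.trans hx10)
  have hy1 : y 1 = -y 0 := mul_left_cancel₀ hx0 (by rw [hx0y1, hx1]; ring)
  refine ⟨fun h2 => hx30 ?_, ?_, ?_⟩
  · linear_combination hx31 + hx1 - x 0 * h2
  · ext i
    fin_cases i <;> simp [← hx02, hx31, hx1]
  · ext i
    fin_cases i <;> simp [hy30, ← hy12, hy1]

theorem IsConfigReal.eq_h1Model (h : IsConfigReal F h1planes lines σ)
    (hcoord : ∀ i, σ (![0, 3, 5, 6] i) = coordPoint F i)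
    (hunit : σ 4 = unitPoint (Fin 4) F) : (2 : F) ≠ 0 ∧ σ = h1Model F := by
  have hv (i : Fin 7) : frameVec (σ 1).rep (σ 2).rep i ≠ 0 := by
    intro hi
    fin_cases i <;> simp [frameVec, rep_nonzero] at hi
  have hσ : σ = fun i => mk F (frameVec (σ 1).rep (σ 2).rep i) (hv i) := by
    ext1 i
    fin_cases i
    exacts [hcoord 0, (mk_rep _).symm, (mk_rep _).symm, hcoord 1, hunit, hcoord 2, hcoord 3]
  rw [hσ] at h
  obtain ⟨h2, hx, hy⟩ := eq_smul_of_isConfigReal_frameVec h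
  refine ⟨h2, ?_⟩
  ext1 i
  rw [hσ, h1Model, mk_eq_mk_iff']
  fin_cases i
  exacts [⟨1, one_smul F _⟩, ⟨_, hx.symm⟩, ⟨_, hy.symm⟩, ⟨1, one_smul F _⟩, ⟨1, one_smul F _⟩,
    ⟨1, one_smul F _⟩, ⟨1, one_smul F _⟩]

theorem IsConfigReal.exists_smul_h1Model (h : IsConfigReal F h1planes lines σ) :
    (2 : F) ≠ 0 ∧ ∃ g : PGL(Fin 4, F), g • h1Model F = σ := by
  obtain ⟨g, hcoord, hunit⟩ := h.isProjectiveFrame.exists_smul_eq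
  obtain ⟨h2, hmodel⟩ := ((isConfigReal_smul_iff g⁻¹).2 h).eq_h1Model
    (fun i => inv_smul_eq_iff.2 (hcoord i).symm) (inv_smul_eq_iff.2 hunit.symm)
  exact ⟨h2, g, (inv_smul_eq_iff.1 hmodel).symm⟩

theorem smul_h1Model_injective : Injective fun g : PGL(Fin 4, F) => g • h1Model F := by
  intro g g' hgg'
  have hfix (j : Fin 7) : (g'⁻¹ * g) • h1Model F j = h1Model F j := by
    rw [mul_smul, inv_smul_eq_iff]
    exact congrFun hgg' j
  have hcoord (i : Fin 4) : (g'⁻¹ * g) • coordPoint F i = coordPoint F i := by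
    fin_cases i
    exacts [hfix 0, hfix 3, hfix 5, hfix 6]
  exact (inv_mul_eq_one.1 (eq_one_of_smul_coordPoint_eq hcoord (hfix 4))).symm

theorem Ah1_formula_general (F : Type) [Field F] [Decidable ((2 : F) = 0)] :
    Cardinal.mk {σ : Fin 7 → ℙ F (Fin 4 → F) // IsConfigReal F h1planes ∅ σ} =
      if (2 : F) = 0 then 0 else Cardinal.mk PGL(Fin 4, F) := by
  split_ifs with h2
  · exact Cardinal.mk_eq_zero_iff.2 ⟨fun σ => σ.2.exists_smul_h1Model.1 h2⟩
  · have hreal (g : PGL(Fin 4, F)) : IsConfigReal F h1planes ∅ (g • h1Model F) :=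
      (isConfigReal_smul_iff g).2 (isConfigReal_h1Model h2)
    refine Cardinal.mk_congr (Equiv.ofBijective (fun g => ⟨g • h1Model F, hreal g⟩) ⟨?_, ?_⟩).symm
    · exact fun g g' hgg' => smul_h1Model_injective (congrArg Subtype.val hgg')
    · intro ⟨σ, hσ⟩
      obtain ⟨-, g, rfl⟩ := hσ.exists_smul_h1Model
      exact ⟨g, rfl⟩

end Classification

theorem even_card_iff_two_eq_zero (F : Type*) [Field F] [Fintype F] :
    Even (Fintype.card F) ↔ (2 : F) = 0 := by
  rw [Nat.even_iff, ← FiniteField.even_card_iff_char_two, ringChar.eq_iff,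
    CharP.charP_iff_prime_eq_zero Nat.prime_two, Nat.cast_ofNat]

theorem card_PGL_eq_card_GL_div (ι F : Type*) [Fintype ι] [DecidableEq ι] [Nonempty ι] [Field F]
    [Fintype F] : Nat.card PGL(ι, F) = Nat.card (GL ι F) / (Fintype.card F - 1) := by
  have hpos : 0 < Fintype.card F - 1 := Nat.sub_pos_of_lt Fintype.one_lt_card
  classical
  rw [← card_PGL_mul_card_units, Nat.card_eq_fintype_card (α := Fˣ), Fintype.card_units,
    Nat.mul_div_cancel _ hpos]

/-- `A_{h₁}(4,q) = (1 - a(q)) · |PGL₄(F_q)|`; in particular there are no strong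
realizations of `h₁` when `q` is even. -/
theorem Ah1_formula (F : Type) [Field F] [Fintype F] (q : ℕ) (hq : q = Fintype.card F) :
    Nat.card {σ : Fin 7 → ℙ F (Fin 4 → F) // IsConfigReal F h1planes ∅ σ} =
        (1 - (if Even q then 1 else 0)) * (Nat.card (GL (Fin 4) F) / (q - 1)) ∧
      (Even q → Nat.card {σ : Fin 7 → ℙ F (Fin 4 → F) // IsConfigReal F h1planes ∅ σ} = 0) := by
  classical
  subst hq
  rw [Nat.card, Ah1_formula_general, ← card_PGL_eq_card_GL_div]
  simp only [even_card_iff_two_eq_zero]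
  split_ifs with h2 <;> simp [h2, Nat.card]
end
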